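/- Let the data buffer consist of N i.i.d. trajectories of length T from a stationary process {(S_t, A_t, R_t)}_{t≥0} that is exponentially β-mixing with rate ρ ∈ (0,1), i.e., β(k) ≤ ρ^k for all k. Suppose: (i) at each step a knockoff action Ã_t is drawn, conditionally on S_t and independently of everything else, so that conditionally on S_t the 2p coordinates of (A_t, Ã_t) are mutually independent with the j-th coordinate of Ã_t having the same conditional law as the j-th coordinate of A_t; (ii) the pair Y_t = (R_t, S_{t+1}) depends on (S_t, A_t, Ã_t) only through S_t and the nonnull coordinates A_{t,G}, where H0 = {1,…,p} \ G is the null index set. Split the NT transition tuples into K = k0 · log(NT) folds by assigning the tuple at time t to fold (t mod K), where k0 > −1/log ρ. On a fold D_k, let W = (W_1,…,W_p) be any measurable function of D_k satisfying the flip-sign property, let τ_α = min{τ ∈ {|W_j| : W_j ≠ 0} : #{j : W_j ≤ −τ} ≤ α · #{j : W_j ≥ τ}}, and let Ĝ_k = {j : W_j ≥ τ_α} (with Ĝ_k = ∅ if no such τ exists). Then there exists a constant c = −k0 · log ρ − 1 > 0 and a constant C, independent of N and T, such that the modified false discovery rate satisfies E[ |Ĝ_k ∩ H0| / (1/α + |Ĝ_k|)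 ] ≤ α + C · K^{−1} (NT)^{−c}. -/

import Mathlib

open MeasureTheory ProbabilityTheory

/-- The swapped pair `[a, ã]_swap(Ω)`: for `j ∈ Ω` the `j`-th coordinates of `a` and `ã`
are exchanged, all other coordinates are left unchanged. -/
def swapPair {p : ℕ} (Ωs : Finset (Fin p)) (a a' : Fin p → ℝ) :
    (Fin p → ℝ) × (Fin p → ℝ) :=
  (fun j => if j ∈ Ωs then a' j else a j, fun j => if j ∈ Ωs then a j else a' j)

/-- The candidate knockoff thresholds for statistics `w` at level `α`: the positive values
`τ ∈ {|w_j| : w_j ≠ 0}` satisfying `#{j : w_j ≤ −τ} ≤ α · #{j : w_j ≥ τ}`. -/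
noncomputable def knockoffThresholds {p : ℕ} (α : ℝ) (w : Fin p → ℝ) : Finset ℝ :=
  ((Finset.univ.filter fun j : Fin p => w j ≠ 0).image fun j => |w j|).filter
    fun τ => ((Finset.univ.filter fun j : Fin p => w j ≤ -τ).card : ℝ)
      ≤ α * ((Finset.univ.filter fun j : Fin p => τ ≤ w j).card : ℝ)

/-- The knockoff selection `Ĝ = {j : w_j ≥ τ_α}` where `τ_α` is the smallest candidate
threshold; `Ĝ = ∅` if no candidate threshold exists. -/
noncomputable def knockoffSelect {p : ℕ} (α : ℝ) (w : Fin p → ℝ) : Finset (Fin p) :=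
  if h : (knockoffThresholds α w).Nonempty then
    Finset.univ.filter fun j : Fin p => (knockoffThresholds α w).min' h ≤ w j
  else ∅

/-- The β-mixing (absolute regularity) coefficient between two sub-σ-algebras `MA`, `MB`
of a probability space `(Ω, P)`. -/
noncomputable def betaCoef {Ω : Type*} [MeasurableSpace Ω] (P : Measure Ω)
    (MA MB : MeasurableSpace Ω) : ℝ :=
  sSup {r : ℝ | ∃ (I J : ℕ) (A : Fin I → Set Ω) (B : Fin J → Set Ω),
    (∀ i, MeasurableSet[MA] (A i)) ∧ (∀ j, MeasurableSet[MB] (B j)) ∧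
    Pairwise (Function.onFun Disjoint A) ∧ Pairwise (Function.onFun Disjoint B) ∧
    (⋃ i, A i) = Set.univ ∧ (⋃ j, B j) = Set.univ ∧
    r = 2⁻¹ * ∑ i, ∑ j,
      |(P (A i ∩ B j)).toReal - (P (A i)).toReal * (P (B j)).toReal|}

/-- The β-mixing coefficient of a process `X` at time lag `k`:
`β(k) = sup_m β(σ(X_t : t ≤ m), σ(X_t : t ≥ m + k))`. -/
noncomputable def processBetaMix {Ω E : Type*} [MeasurableSpace Ω] [MeasurableSpace E]
    (P : Measure Ω) (X : ℕ → Ω → E) (k : ℕ) : ℝ :=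
  ⨆ m : ℕ, betaCoef P
    (⨆ t ∈ Set.Iic m, MeasurableSpace.comap (X t) inferInstance)
    (⨆ t ∈ Set.Ici (m + k), MeasurableSpace.comap (X t) inferInstance)

/-! ### Part A: the deterministic knockoff inequality -/

/-- A candidate threshold. -/
def kCand {p : ℕ} (α : ℝ) (w : Fin p → ℝ) (τ : ℝ) : Prop :=
  ((Finset.univ.filter fun j : Fin p => w j ≤ -τ).card : ℝ)
      ≤ α * ((Finset.univ.filter fun j : Fin p => τ ≤ w j).card : ℝ)

lemma mem_knockoffThresholds {p : ℕ} (α : ℝ) (w : Fin p → ℝ) (τ : ℝ) :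
    τ ∈ knockoffThresholds α w ↔ (∃ i, w i ≠ 0 ∧ |w i| = τ) ∧ kCand α w τ := by
  simp [knockoffThresholds, kCand]

lemma mem_knockoffSelect {p : ℕ} (α : ℝ) (w : Fin p → ℝ) (j : Fin p) :
    j ∈ knockoffSelect α w ↔ ∃ i, w i ≠ 0 ∧ kCand α w |w i| ∧ |w i| ≤ w j := by
  unfold knockoffSelect
  split_ifs with h
  · simp only [Finset.mem_filter, Finset.mem_univ, true_and]
    constructor
    · intro hj
      have := Finset.min'_mem _ h
      rw [mem_knockoffThresholds] at this
      obtain ⟨⟨i, hi0, hi⟩, hc⟩ := this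
      exact ⟨i, hi0, by rw [hi]; exact hc, by rw [hi]; exact hj⟩
    · rintro ⟨i, hi0, hc, hle⟩
      exact le_trans (Finset.min'_le _ _ ((mem_knockoffThresholds _ _ _).2 ⟨⟨i, hi0, rfl⟩, hc⟩)) hle
  · simp only [Finset.notMem_empty, false_iff]
    rintro ⟨i, hi0, hc, hle⟩
    exact h ⟨_, (mem_knockoffThresholds _ _ _).2 ⟨⟨i, hi0, rfl⟩, hc⟩⟩

/-- If something is selected, the selection is given by a minimal threshold. -/
lemma exists_threshold {p : ℕ} (α : ℝ) (w : Fin p → ℝ) (j : Fin p)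
    (hj : j ∈ knockoffSelect α w) :
    ∃ τ, 0 < τ ∧ τ ∈ knockoffThresholds α w ∧ (∀ σ ∈ knockoffThresholds α w, τ ≤ σ) ∧
      knockoffSelect α w = Finset.univ.filter fun j : Fin p => τ ≤ w j := by
  unfold knockoffSelect at hj ⊢
  split_ifs at hj ⊢ with h
  · refine ⟨_, ?_, Finset.min'_mem _ h, fun σ hσ => Finset.min'_le _ _ hσ, rfl⟩
    have := Finset.min'_mem _ h
    rw [mem_knockoffThresholds] at this
    obtain ⟨⟨i, hi0, hi⟩, hc⟩ := this
    rw [← hi]; exact abs_pos.2 hi0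
  · simp at hj

/-- Flip the sign of a coordinate. -/
def flipAt {p : ℕ} (j : Fin p) (w : Fin p → ℝ) : Fin p → ℝ :=
  fun i => if i ∈ ({j} : Finset (Fin p)) then - w i else w i

lemma flipAt_self {p : ℕ} (j : Fin p) (w : Fin p → ℝ) : flipAt j w j = - w j := by
  simp [flipAt]

lemma flipAt_ne {p : ℕ} (j i : Fin p) (h : i ≠ j) (w : Fin p → ℝ) : flipAt j w i = w i := by
  simp [flipAt, h]

lemma abs_flipAt {p : ℕ} (j i : Fin p) (w : Fin p → ℝ) : |flipAt j w i| = |w i| := by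
  by_cases h : i = j
  · subst h; rw [flipAt_self, abs_neg]
  · rw [flipAt_ne _ _ h]

lemma card_neg_flip {p : ℕ} (j : Fin p) (w : Fin p → ℝ) (τ : ℝ) (hτ : 0 < τ) (h : w j ≤ -τ) :
    (Finset.univ.filter fun i : Fin p => w i ≤ -τ).card
      = (Finset.univ.filter fun i : Fin p => flipAt j w i ≤ -τ).card + 1 := by
  have : (Finset.univ.filter fun i : Fin p => w i ≤ -τ)
      = insert j (Finset.univ.filter fun i : Fin p => flipAt j w i ≤ -τ) := by
    ext i
    by_cases hi : i = j
    · subst hi; simp [h]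
    · simp [hi, flipAt_ne _ _ hi]
  rw [this, Finset.card_insert_of_notMem]
  simp only [Finset.mem_filter, Finset.mem_univ, true_and, flipAt_self]
  linarith

lemma card_pos_flip {p : ℕ} (j : Fin p) (w : Fin p → ℝ) (τ : ℝ) (hτ : 0 < τ) (h : w j ≤ -τ) :
    (Finset.univ.filter fun i : Fin p => τ ≤ flipAt j w i).card
      = (Finset.univ.filter fun i : Fin p => τ ≤ w i).card + 1 := by
  have : (Finset.univ.filter fun i : Fin p => τ ≤ flipAt j w i)
      = insert j (Finset.univ.filter fun i : Fin p => τ ≤ w i) := by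
    ext i
    by_cases hi : i = j
    · subst hi; simp [flipAt_self]; linarith
    · simp [hi, flipAt_ne _ _ hi]
  rw [this, Finset.card_insert_of_notMem]
  simp only [Finset.mem_filter, Finset.mem_univ, true_and]
  linarith

lemma cand_flip_transfer {p : ℕ} (α : ℝ) (j k : Fin p) (w : Fin p → ℝ) (τ : ℝ) (hτ : 0 < τ)
    (hj : w j ≤ -τ) (hk : w k ≤ -τ) (h : τ ∈ knockoffThresholds α (flipAt j w)) :
    τ ∈ knockoffThresholds α (flipAt k w) := by
  rw [mem_knockoffThresholds] at h ⊢
  obtain ⟨⟨i, hi0, hi⟩, hc⟩ := h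
  refine ⟨⟨i, ?_, ?_⟩, ?_⟩
  · rw [← abs_pos, abs_flipAt] at hi0 ⊢; exact hi0
  · rw [abs_flipAt] at hi ⊢; exact hi
  · unfold kCand at hc ⊢
    have e1 := card_neg_flip j w τ hτ hj
    have e2 := card_neg_flip k w τ hτ hk
    have e3 := card_pos_flip j w τ hτ hj
    have e4 := card_pos_flip k w τ hτ hk
    have e5 : (Finset.univ.filter fun i : Fin p => flipAt j w i ≤ -τ).card
      = (Finset.univ.filter fun i : Fin p => flipAt k w i ≤ -τ).card := by omega
    rw [← e5, e4, ← e3]; exact hc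

/-- The per-coordinate contribution to the modified FDP. -/
noncomputable def contrib {p : ℕ} (α : ℝ) (j : Fin p) (Gh : Finset (Fin p)) : ℝ :=
  if j ∈ Gh then 1 / (1 / α + (Gh.card : ℝ)) else 0

lemma contrib_nonneg {p : ℕ} (α : ℝ) (hα : 0 < α) (j : Fin p) (Gh : Finset (Fin p)) :
    0 ≤ contrib α j Gh := by
  unfold contrib; split_ifs <;> positivity

lemma contrib_le {p : ℕ} (α : ℝ) (hα : 0 < α) (j : Fin p) (Gh : Finset (Fin p)) :
    contrib α j Gh ≤ α := by
  unfold contrib; split_ifs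
  · rw [div_le_iff₀ (by positivity)]
    have : α * (1 / α) = 1 := by field_simp
    nlinarith [(Nat.cast_nonneg Gh.card : (0:ℝ) ≤ Gh.card)]
  · exact hα.le

lemma mfdp_eq {p : ℕ} (α : ℝ) (H0 Gh : Finset (Fin p)) :
    ((Gh ∩ H0).card : ℝ) / (1 / α + (Gh.card : ℝ)) = ∑ j ∈ H0, contrib α j Gh := by
  unfold contrib
  rw [← Finset.sum_filter, Finset.sum_const, nsmul_eq_mul, mul_one_div]
  congr 3
  ext j; simp [and_comm]

lemma sum_contrib_flip_le {p : ℕ} (α : ℝ) (hα : 0 < α) (H0 : Finset (Fin p))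
    (w : Fin p → ℝ) : ∑ j ∈ H0, contrib α j (knockoffSelect α (flipAt j w)) ≤ α := by
  classical
  set J := H0.filter fun j => j ∈ knockoffSelect α (flipAt j w) with hJ
  have h1 : ∑ j ∈ H0, contrib α j (knockoffSelect α (flipAt j w))
      = ∑ j ∈ J, 1 / (1 / α + ((knockoffSelect α (flipAt j w)).card : ℝ)) := by
    rw [hJ, Finset.sum_filter]; rfl
  rw [h1]
  rcases J.eq_empty_or_nonempty with h0 | h0
  · rw [h0]; simpa using hα.le
  have hmem : ∀ j ∈ J, j ∈ knockoffSelect α (flipAt j w) := fun j hj =>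
    (Finset.mem_filter.1 hj).2
  have hex : ∀ j, ∃ τ : ℝ, j ∈ J → (0 < τ ∧ τ ∈ knockoffThresholds α (flipAt j w) ∧
      (∀ σ ∈ knockoffThresholds α (flipAt j w), τ ≤ σ) ∧
      knockoffSelect α (flipAt j w) = (Finset.univ.filter fun i : Fin p => τ ≤ flipAt j w i)
      ∧ w j ≤ -τ) := by
    intro j
    by_cases hj : j ∈ J
    · obtain ⟨τ, a, b, c, d⟩ := exists_threshold α _ j (hmem j hj)
      refine ⟨τ, fun _ => ⟨a, b, c, d, ?_⟩⟩
      have := hmem j hj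
      rw [d, Finset.mem_filter, flipAt_self] at this
      linarith [this.2]
    · exact ⟨0, fun h => absurd h hj⟩
  choose τ hτ using hex
  have hle : ∀ j ∈ J, ∀ k ∈ J, τ j ≤ τ k → τ k ≤ τ j := by
    intro j hj k hk h
    obtain ⟨a, b, c, d, e⟩ := hτ j hj
    obtain ⟨a', b', c', d', e'⟩ := hτ k hk
    exact c' _ (cand_flip_transfer α j k w (τ j) a e (by linarith) b)
  have heq : ∀ j ∈ J, ∀ k ∈ J, τ j = τ k := by
    intro j hj k hk
    rcases le_total (τ j) (τ k) with h | h
    · exact le_antisymm h (hle j hj k hk h)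
    · exact le_antisymm (hle k hk j hj h) h
  have hJpos : (0 : ℝ) < J.card := by exact_mod_cast h0.card_pos
  have hb : ∀ j ∈ J, 1 / (1 / α + ((knockoffSelect α (flipAt j w)).card : ℝ)) ≤ α / J.card := by
    intro j hj
    obtain ⟨a, b, c, d, e⟩ := hτ j hj
    have hsub : J ⊆ Finset.univ.filter fun i : Fin p => w i ≤ -τ j := by
      intro k hk
      simp only [Finset.mem_filter, Finset.mem_univ, true_and]
      rw [heq j hj k hk]; exact (hτ k hk).2.2.2.2
    have hc := Finset.card_le_card hsub
    rw [card_neg_flip j w (τ j) a e] at hc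
    have hc' : (J.card : ℝ) ≤ (Finset.univ.filter fun i : Fin p => flipAt j w i ≤ -τ j).card + 1 := by
      exact_mod_cast hc
    have hcand := ((mem_knockoffThresholds _ _ _).1 b).2
    unfold kCand at hcand
    rw [← d] at hcand
    rw [div_le_div_iff₀ (by positivity) hJpos]
    have : α * (1 / α) = 1 := by field_simp
    rw [mul_add, this]; linarith
  calc _ ≤ ∑ j ∈ J, α / J.card := Finset.sum_le_sum hb
    _ = α := by rw [Finset.sum_const, nsmul_eq_mul]; field_simp

lemma measurableSet_kCand {p : ℕ} (α : ℝ) (i : Fin p) :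
    MeasurableSet {w : Fin p → ℝ | kCand α w |w i|} := by
  have hev : ∀ j : Fin p, Measurable fun w : Fin p → ℝ => w j := fun j => measurable_pi_apply j
  have habs : ∀ j : Fin p, Measurable fun w : Fin p → ℝ => |w j| := fun j =>
    measurable_abs.comp (measurable_pi_apply j)
  unfold kCand
  simp only [Finset.card_filter, Nat.cast_sum, Nat.cast_ite, Nat.cast_one, Nat.cast_zero]
  refine measurableSet_le (Finset.measurable_sum _ fun j _ => ?_)
    ((Finset.measurable_sum _ fun j _ => ?_).const_mul α)
  · exact Measurable.ite (measurableSet_le (hev j) (habs i).neg) measurable_const measurable_const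
  · exact Measurable.ite (measurableSet_le (habs i) (hev j)) measurable_const measurable_const

lemma measurable_comp_select {p : ℕ} (α : ℝ) (F : Finset (Fin p) → ℝ) :
    Measurable fun w : Fin p → ℝ => F (knockoffSelect α w) := by
  let _ : MeasurableSpace (Finset (Fin p)) := ⊤
  have : Measurable fun w : Fin p → ℝ => knockoffSelect α w := by
    refine measurable_to_countable' fun s => ?_
    have : (fun w : Fin p → ℝ => knockoffSelect α w) ⁻¹' {s}
        = ⋂ j, {w | (∃ i, w i ≠ 0 ∧ kCand α w |w i| ∧ |w i| ≤ w j) ↔ j ∈ s} := by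
      ext w
      simp only [Set.mem_preimage, Set.mem_singleton_iff, Set.mem_iInter, Set.mem_ofPred_eq,
        Finset.ext_iff, mem_knockoffSelect]
    rw [this]
    refine MeasurableSet.iInter fun j => ?_
    have h1 : MeasurableSet {w : Fin p → ℝ | ∃ i, w i ≠ 0 ∧ kCand α w |w i| ∧ |w i| ≤ w j} := by
      rw [Set.ofPred_exists]
      refine MeasurableSet.iUnion fun i => ?_
      refine MeasurableSet.inter ?_ (MeasurableSet.inter (measurableSet_kCand α i) ?_)
      · exact (measurableSet_eq_fun (measurable_pi_apply i) measurable_const).compl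
      · exact measurableSet_le (measurable_abs.comp (measurable_pi_apply i)) (measurable_pi_apply j)
    by_cases hj : j ∈ s
    · simp only [hj, iff_true]; exact h1
    · simp only [hj, iff_false]; exact h1.compl
  exact (measurable_from_top (f := F)).comp this

/-- The knockoff bound for a single-flip exchangeable law. -/
lemma knockoff_bound {p : ℕ} {D : Type*} [MeasurableSpace D] (Q : Measure D)
    [IsProbabilityMeasure Q] (α : ℝ) (hα : 0 < α) (H0 : Finset (Fin p))
    (W : D → Fin p → ℝ) (hW : Measurable W) (σ : Fin p → D → D)
    (hσ : ∀ j ∈ H0, MeasurePreserving (σ j) Q Q)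
    (hflip : ∀ j ∈ H0, ∀ d, W (σ j d) = flipAt j (W d)) :
    ∫ d, ((knockoffSelect α (W d) ∩ H0).card : ℝ) /
        (1 / α + ((knockoffSelect α (W d)).card : ℝ)) ∂Q ≤ α := by
  have hm : ∀ j, Measurable fun w : Fin p → ℝ => contrib α j (knockoffSelect α w) := fun j =>
    measurable_comp_select α (contrib α j)
  have hIntg : ∀ j (f : D → Fin p → ℝ), Measurable f →
      Integrable (fun d => contrib α j (knockoffSelect α (f d))) Q := by
    intro j f hf
    refine Integrable.of_bound ((hm j).comp hf).aestronglyMeasurable α (Filter.Eventually.of_forall ?_)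
    intro d
    rw [Real.norm_of_nonneg (contrib_nonneg α hα _ _)]
    exact contrib_le α hα _ _
  have hfl : ∀ j, Measurable (flipAt (p := p) j) := by
    intro j
    refine measurable_pi_lambda _ fun i => ?_
    unfold flipAt
    by_cases h : i ∈ ({j} : Finset (Fin p))
    · simp only [h, if_true]; exact (measurable_pi_apply i).neg
    · simp only [h, if_false]; exact measurable_pi_apply i
  simp only [mfdp_eq]
  rw [integral_finsetSum _ fun j _ => hIntg j W hW]
  have : ∀ j ∈ H0, ∫ d, contrib α j (knockoffSelect α (W d)) ∂Q
      = ∫ d, contrib α j (knockoffSelect α (flipAt j (W d))) ∂Q := by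
    intro j hj
    have h := hσ j hj
    conv_lhs => rw [← h.map_eq]
    rw [integral_map (f := fun d => contrib α j (knockoffSelect α (W d)))
      h.measurable.aemeasurable ((hm j).comp hW).aestronglyMeasurable]
    simp only [hflip j hj]
  rw [Finset.sum_congr rfl this, ← integral_finsetSum _ fun j _ => hIntg j (fun d => flipAt j (W d)) ((hfl j).comp hW)]
  calc _ ≤ ∫ d, α ∂Q := by
        refine integral_mono (integrable_finsetSum _ fun j _ => hIntg j (fun d => flipAt j (W d)) ((hfl j).comp hW))
          (integrable_const _) fun d => sum_contrib_flip_le α hα H0 (W d)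
    _ = α := by simp

/-! ### Part B: total variation and mixing -/

open scoped ENNReal

/-- `μ` and `ν` are within `δ` in total variation (one-sided, tested on `[0,1]`-valued
functions). -/
def TVle {E : Type*} [MeasurableSpace E] (μ ν : Measure E) (δ : ℝ≥0∞) : Prop :=
  ∀ f : E → ℝ≥0∞, Measurable f → (∀ x, f x ≤ 1) → ∫⁻ x, f x ∂μ ≤ ∫⁻ x, f x ∂ν + δ

lemma TVle.map {E F : Type*} [MeasurableSpace E] [MeasurableSpace F] {μ ν : Measure E}
    {δ : ℝ≥0∞} (h : TVle μ ν δ) {g : E → F} (hg : Measurable g) :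
    TVle (μ.map g) (ν.map g) δ := by
  intro f hf hf1
  rw [lintegral_map hf hg, lintegral_map hf hg]
  exact h _ (hf.comp hg) fun x => hf1 _

lemma TVle.trans {E : Type*} [MeasurableSpace E] {μ ν η : Measure E} {δ δ' : ℝ≥0∞}
    (h : TVle μ ν δ) (h' : TVle ν η δ') : TVle μ η (δ' + δ) := by
  intro f hf hf1
  refine (h f hf hf1).trans ?_
  rw [← add_assoc]
  gcongr
  exact h' f hf hf1

lemma TVle.prod_left {E F : Type*} [MeasurableSpace E] [MeasurableSpace F] {μ ν : Measure E}
    [IsProbabilityMeasure μ] [IsProbabilityMeasure ν]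
    {δ : ℝ≥0∞} (h : TVle μ ν δ) (η : Measure F) [IsProbabilityMeasure η] :
    TVle (μ.prod η) (ν.prod η) δ := by
  intro f hf hf1
  rw [lintegral_prod _ hf.aemeasurable, lintegral_prod _ hf.aemeasurable]
  refine h _ hf.lintegral_prod_right' fun x => ?_
  calc _ ≤ ∫⁻ y, 1 ∂η := lintegral_mono fun y => hf1 _
    _ = 1 := by simp

lemma TVle.prod_right {E F : Type*} [MeasurableSpace E] [MeasurableSpace F] {μ ν : Measure E}
    [IsProbabilityMeasure μ] [IsProbabilityMeasure ν]
    {δ : ℝ≥0∞} (h : TVle μ ν δ) (η : Measure F) [IsProbabilityMeasure η] :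
    TVle (η.prod μ) (η.prod ν) δ := by
  have := (h.prod_left η).map measurable_swap
  rwa [Measure.prod_swap, Measure.prod_swap] at this

/-- From sets to functions. -/
lemma TVle.of_sets {E : Type*} [MeasurableSpace E] {μ ν : Measure E}
    [IsProbabilityMeasure μ] [IsProbabilityMeasure ν] {δ : ℝ≥0∞}
    (h : ∀ s, MeasurableSet s → μ s ≤ ν s + δ) : TVle μ ν δ := by
  intro f hf hf1
  have hfin : ∀ x, f x ≠ ∞ := fun x => ne_top_of_le_ne_top ENNReal.one_ne_top (hf1 x)
  have e : ∀ η : Measure E, ∫⁻ x, f x ∂η = ∫⁻ t in Set.Ioi (0:ℝ), η {a | t < (f a).toReal} := by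
    intro η
    rw [← lintegral_eq_lintegral_meas_lt η (Filter.Eventually.of_forall fun x =>
      ENNReal.toReal_nonneg) hf.ennreal_toReal.aemeasurable]
    refine lintegral_congr fun x => (ENNReal.ofReal_toReal (hfin x)).symm
  rw [e μ, e ν]
  have hle : ∀ t : ℝ, t ∈ Set.Ioi (0:ℝ) → μ {a | t < (f a).toReal} ≤ ν {a | t < (f a).toReal} +
      (Set.Ioo (0:ℝ) 1).indicator (fun _ => δ) t := by
    intro t ht
    by_cases h1 : t < 1
    · rw [Set.indicator_of_mem (show t ∈ Set.Ioo (0:ℝ) 1 from ⟨ht, h1⟩)]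
      exact h _ (measurableSet_lt measurable_const hf.ennreal_toReal)
    · have : {a | t < (f a).toReal} = ∅ := by
        ext a
        simp only [Set.mem_ofPred_eq, Set.mem_empty_iff_false, iff_false, not_lt]
        have := ENNReal.toReal_mono ENNReal.one_ne_top (hf1 a)
        simp at this
        linarith
      rw [this]; simp
  calc _ ≤ ∫⁻ t in Set.Ioi (0:ℝ), (ν {a | t < (f a).toReal} +
      (Set.Ioo (0:ℝ) 1).indicator (fun _ => δ) t) := setLIntegral_mono' measurableSet_Ioi hle
    _ = (∫⁻ t in Set.Ioi (0:ℝ), ν {a | t < (f a).toReal}) +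
        ∫⁻ t in Set.Ioi (0:ℝ), (Set.Ioo (0:ℝ) 1).indicator (fun _ => δ) t :=
      lintegral_add_right _ (measurable_const.indicator measurableSet_Ioo)
    _ ≤ _ := by
      gcongr
      calc _ ≤ ∫⁻ t, (Set.Ioo (0:ℝ) 1).indicator (fun _ => δ) t := setLIntegral_le_lintegral _ _
        _ = δ := by rw [lintegral_indicator measurableSet_Ioo]; simp

/-- Replacing a factor `Fin (M+1)`. -/
lemma TVle.fin_succ {E : Type*} [MeasurableSpace E] {M : ℕ} {δ : ℝ≥0∞}
    (μ : Measure (Fin (M + 1) → E)) (Q : Fin (M + 1) → Measure E)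
    [∀ i, IsProbabilityMeasure (Q i)]
    (h : TVle (μ.map fun x => (x (Fin.last M), fun i : Fin M => x i.castSucc))
      ((Q (Fin.last M)).prod (Measure.pi fun i : Fin M => Q i.castSucc)) δ) :
    TVle μ (Measure.pi Q) δ := by
  have mp := measurePreserving_piFinSuccAbove Q (Fin.last M)
  have e : (⇑(MeasurableEquiv.piFinSuccAbove (fun _ : Fin (M+1) => E) (Fin.last M)))
      = fun x => (x (Fin.last M), fun i : Fin M => x i.castSucc) := by
    funext x
    ext
    · rfl
    · simp [MeasurableEquiv.piFinSuccAbove, Fin.insertNthEquiv, Fin.init]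
  have h1 : Measure.map (MeasurableEquiv.piFinSuccAbove (fun _ : Fin (M+1) => E) (Fin.last M))
      (Measure.pi Q) = (Q (Fin.last M)).prod (Measure.pi fun i : Fin M => Q i.castSucc) := by
    rw [mp.map_eq]; simp
  rw [← h1, ← e] at h
  have := h.map (MeasurableEquiv.piFinSuccAbove (fun _ : Fin (M+1) => E) (Fin.last M)).symm.measurable
  rw [Measure.map_map (MeasurableEquiv.measurable _) (MeasurableEquiv.measurable _),
    Measure.map_map (MeasurableEquiv.measurable _) (MeasurableEquiv.measurable _),
    MeasurableEquiv.symm_comp_self, Measure.map_id, Measure.map_id] at this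
  exact this

lemma TVle.pi_const {E : Type*} [MeasurableSpace E] {μ ν : Measure E} {δ : ℝ≥0∞}
    [IsProbabilityMeasure μ] [IsProbabilityMeasure ν] (h : TVle μ ν δ) (N : ℕ) :
    TVle (Measure.pi fun _ : Fin N => μ) (Measure.pi fun _ : Fin N => ν) (N * δ) := by
  induction N with
  | zero =>
    intro f hf hf1
    rw [Measure.pi_of_empty (fun _ : Fin 0 => μ), Measure.pi_of_empty (fun _ : Fin 0 => ν)]
    simp
  | succ N ih =>
    refine TVle.fin_succ _ _ ?_
    have mp := measurePreserving_piFinSuccAbove (fun _ : Fin (N+1) => μ) (Fin.last N)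
    have e : (⇑(MeasurableEquiv.piFinSuccAbove (fun _ : Fin (N+1) => E) (Fin.last N)))
        = fun x => (x (Fin.last N), fun i : Fin N => x i.castSucc) := by
      funext x
      ext
      · rfl
      · simp [MeasurableEquiv.piFinSuccAbove, Fin.insertNthEquiv, Fin.init]
    rw [← e, mp.map_eq]
    have := (h.prod_left (Measure.pi fun _ : Fin N => μ)).trans (ih.prod_right ν)
    simpa [add_mul] using this

/-- Integral form. -/
lemma TVle.integral {E : Type*} [MeasurableSpace E] {μ ν : Measure E} {δ : ℝ}
    [IsProbabilityMeasure μ] [IsProbabilityMeasure ν] (hδ : 0 ≤ δ)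
    (h : TVle μ ν (ENNReal.ofReal δ)) (f : E → ℝ) (hf : Measurable f) (h0 : ∀ x, 0 ≤ f x)
    (h1 : ∀ x, f x ≤ 1) : ∫ x, f x ∂μ ≤ ∫ x, f x ∂ν + δ := by
  have hi : ∀ η : Measure E, IsProbabilityMeasure η → Integrable f η := by
    intro η _
    refine Integrable.of_bound hf.aestronglyMeasurable 1 (Filter.Eventually.of_forall fun x => ?_)
    rw [Real.norm_of_nonneg (h0 x)]; exact h1 x
  have := h (fun x => ENNReal.ofReal (f x)) hf.ennreal_ofReal fun x => by
    rw [← ENNReal.ofReal_one]; exact ENNReal.ofReal_le_ofReal (h1 x)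
  rw [← ofReal_integral_eq_lintegral_ofReal (hi μ inferInstance) (Filter.Eventually.of_forall h0),
    ← ofReal_integral_eq_lintegral_ofReal (hi ν inferInstance) (Filter.Eventually.of_forall h0),
    ← ENNReal.ofReal_add (integral_nonneg h0) hδ] at this
  exact (ENNReal.ofReal_le_ofReal_iff (add_nonneg (integral_nonneg h0) hδ)).1 this

/-- Extending the left component by a conditionally independent variable. -/
lemma TVle.extend {Ω X Y B : Type*} [MeasurableSpace Ω] [MeasurableSpace X] [MeasurableSpace Y]
    [MeasurableSpace B] (P : Measure Ω) [IsProbabilityMeasure P] {δ : ℝ≥0∞}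
    (x : Ω → X) (y : Ω → Y) (a : Ω → B) (hx : Measurable x) (hy : Measurable y)
    (ha : Measurable a) (κ : Kernel X B) [IsMarkovKernel κ]
    (h : TVle (P.map fun ω => (x ω, y ω)) ((P.map x).prod (P.map y)) δ)
    (h1 : P.map (fun ω => ((x ω, y ω), a ω))
      = (P.map fun ω => (x ω, y ω)) ⊗ₘ (κ.comap Prod.fst measurable_fst))
    (h2 : P.map (fun ω => (x ω, a ω)) = (P.map x) ⊗ₘ κ) :
    TVle (P.map fun ω => ((x ω, a ω), y ω)) ((P.map fun ω => (x ω, a ω)).prod (P.map y)) δ := by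
  have : IsProbabilityMeasure (P.map x) := Measure.isProbabilityMeasure_map hx.aemeasurable
  have : IsProbabilityMeasure (P.map y) := Measure.isProbabilityMeasure_map hy.aemeasurable
  have : IsProbabilityMeasure (P.map fun ω => (x ω, a ω)) :=
    Measure.isProbabilityMeasure_map (hx.prodMk ha).aemeasurable
  have : IsProbabilityMeasure (P.map fun ω => (x ω, y ω)) :=
    Measure.isProbabilityMeasure_map (hx.prodMk hy).aemeasurable
  intro f hf hf1
  have hr : Measurable fun z : (X × Y) × B => ((z.1.1, z.2), z.1.2) := by fun_prop
  have e1 : P.map (fun ω => ((x ω, a ω), y ω))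
      = (P.map (fun ω => ((x ω, y ω), a ω))).map (fun z => ((z.1.1, z.2), z.1.2)) := by
    rw [Measure.map_map hr (by fun_prop)]; rfl
  rw [e1, lintegral_map hf hr, h1, Measure.lintegral_compProd
    (f := fun z : (X × Y) × B => f ((z.1.1, z.2), z.1.2)) (hf.comp hr)]
  have hg : Measurable fun z : X × Y => ∫⁻ b, f ((z.1, b), z.2) ∂(κ.comap Prod.fst measurable_fst z) :=
    Measurable.lintegral_kernel_prod_right' (κ := κ.comap Prod.fst measurable_fst) (hf.comp hr)
  refine (h _ hg fun z => ?_).trans ?_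
  · calc _ ≤ ∫⁻ b, 1 ∂(κ.comap Prod.fst measurable_fst z) := lintegral_mono fun y => hf1 _
      _ = 1 := by simp
  · gcongr
    rw [lintegral_prod_symm _ hg.aemeasurable, lintegral_prod_symm _ hf.aemeasurable]
    refine lintegral_mono fun y => ?_
    rw [h2, Measure.lintegral_compProd (f := fun z : X × B => f (z, y))
      (hf.comp (by fun_prop : Measurable fun z : X × B => (z, y)))]
    rfl

/-- The real total sums of grid cells. -/
lemma grid_sum {X Y : Type*} [MeasurableSpace X] [MeasurableSpace Y] (μ : Measure (X × Y))
    [IsFiniteMeasure μ] {I J : ℕ} (f : X → Fin I) (g : Y → Fin J) (hf : Measurable f)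
    (hg : Measurable g) (D : Finset (Fin I × Fin J)) :
    ∑ ij ∈ D, μ.real ((f ⁻¹' {ij.1}) ×ˢ (g ⁻¹' {ij.2})) = μ.real {z | (f z.1, g z.2) ∈ D} := by
  have := sum_measureReal_preimage_singleton (μ := μ) D (f := fun z : X × Y => (f z.1, g z.2))
    (fun y _ => by
      have : Measurable fun z : X × Y => (f z.1, g z.2) := by fun_prop
      exact this (measurableSet_singleton y))
  rw [show {z : X × Y | (f z.1, g z.2) ∈ D} = (fun z : X × Y => (f z.1, g z.2)) ⁻¹' ↑D from rfl,
    ← this]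
  refine Finset.sum_congr rfl fun ij _ => ?_
  congr 1
  ext z
  simp [Prod.ext_iff]

lemma betaCoef_le_one_aux {Ω : Type*} [MeasurableSpace Ω] (P : Measure Ω)
    [IsProbabilityMeasure P] {I J : ℕ} (A : Fin I → Set Ω) (B : Fin J → Set Ω)
    (hA : ∀ i, MeasurableSet (A i)) (hB : ∀ j, MeasurableSet (B j))
    (dA : Pairwise (Function.onFun Disjoint A)) (dB : Pairwise (Function.onFun Disjoint B))
    (uA : (⋃ i, A i) = Set.univ) (uB : (⋃ j, B j) = Set.univ) :
    2⁻¹ * ∑ i, ∑ j, |(P (A i ∩ B j)).toReal - (P (A i)).toReal * (P (B j)).toReal| ≤ 1 := by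
  have sA : ∑ i, P.real (A i) = 1 := by
    rw [← measureReal_iUnion_fintype dA hA, uA]; simp
  have sB : ∑ j, P.real (B j) = 1 := by
    rw [← measureReal_iUnion_fintype dB hB, uB]; simp
  have sAB : ∀ i, ∑ j, P.real (A i ∩ B j) = P.real (A i) := by
    intro i
    rw [← measureReal_iUnion_fintype (fun j j' h => ?_) (fun j => (hA i).inter (hB j)),
      ← Set.inter_iUnion, uB, Set.inter_univ]
    exact (dB h).mono Set.inter_subset_right Set.inter_subset_right
  have : ∑ i, ∑ j, |(P (A i ∩ B j)).toReal - (P (A i)).toReal * (P (B j)).toReal|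
      ≤ ∑ i, ∑ j, (P.real (A i ∩ B j) + P.real (A i) * P.real (B j)) := by
    refine Finset.sum_le_sum fun i _ => Finset.sum_le_sum fun j _ => ?_
    refine (abs_sub _ _).trans ?_
    rw [abs_of_nonneg ENNReal.toReal_nonneg, abs_of_nonneg (by positivity)]
    rfl
  have e : ∑ i, ∑ j, (P.real (A i ∩ B j) + P.real (A i) * P.real (B j)) = 2 := by
    simp only [Finset.sum_add_distrib, sAB, ← Finset.mul_sum, sB, mul_one, sA]
    norm_num
  linarith

lemma betaCoef_bddAbove {Ω : Type*} (MA MB : MeasurableSpace Ω) [mΩ : MeasurableSpace Ω]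
    (P : Measure Ω) [IsProbabilityMeasure P] (hMA : MA ≤ mΩ) (hMB : MB ≤ mΩ) :
    ∀ r ∈ {r : ℝ | ∃ (I J : ℕ) (A : Fin I → Set Ω) (B : Fin J → Set Ω),
    (∀ i, MeasurableSet[MA] (A i)) ∧ (∀ j, MeasurableSet[MB] (B j)) ∧
    Pairwise (Function.onFun Disjoint A) ∧ Pairwise (Function.onFun Disjoint B) ∧
    (⋃ i, A i) = Set.univ ∧ (⋃ j, B j) = Set.univ ∧
    r = 2⁻¹ * ∑ i, ∑ j,
      |(P (A i ∩ B j)).toReal - (P (A i)).toReal * (P (B j)).toReal|}, r ≤ 1 := by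
  rintro r ⟨I, J, A, B, hA, hB, dA, dB, uA, uB, rfl⟩
  exact betaCoef_le_one_aux P A B (fun i => hMA _ (hA i)) (fun j => hMB _ (hB j)) dA dB uA uB

lemma betaCoef_le_one {Ω : Type*} (MA MB : MeasurableSpace Ω) [mΩ : MeasurableSpace Ω]
    (P : Measure Ω) [IsProbabilityMeasure P] (hMA : MA ≤ mΩ) (hMB : MB ≤ mΩ) :
    betaCoef P MA MB ≤ 1 :=
  Real.sSup_le (betaCoef_bddAbove MA MB P hMA hMB) zero_le_one

/-- Bound on grid sets. -/
lemma beta_grid {Ω X Y : Type*} (MA MB : MeasurableSpace Ω) [mΩ : MeasurableSpace Ω]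
    [MeasurableSpace X] [MeasurableSpace Y]
    (P : Measure Ω) [IsProbabilityMeasure P] (hMA : MA ≤ mΩ)
    (hMB : MB ≤ mΩ) (x : Ω → X) (y : Ω → Y) (hx : Measurable[MA] x) (hy : Measurable[MB] y)
    {I J : ℕ} (f : X → Fin I) (g : Y → Fin J) (hf : Measurable f) (hg : Measurable g)
    (D : Finset (Fin I × Fin J)) :
    (P.map fun ω => (x ω, y ω)).real {z | (f z.1, g z.2) ∈ D}
      ≤ ((P.map x).prod (P.map y)).real {z | (f z.1, g z.2) ∈ D} + betaCoef P MA MB := by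
  have hx' : Measurable x := hx.mono hMA le_rfl
  have hy' : Measurable y := hy.mono hMB le_rfl
  have : IsProbabilityMeasure (P.map x) := Measure.isProbabilityMeasure_map hx'.aemeasurable
  have : IsProbabilityMeasure (P.map y) := Measure.isProbabilityMeasure_map hy'.aemeasurable
  have : IsProbabilityMeasure (P.map fun ω => (x ω, y ω)) :=
    Measure.isProbabilityMeasure_map (hx'.prodMk hy').aemeasurable
  set μ := P.map fun ω => (x ω, y ω)
  set ν := (P.map x).prod (P.map y)
  set A : Fin I → Set Ω := fun i => (fun ω => f (x ω)) ⁻¹' {i}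
  set B : Fin J → Set Ω := fun j => (fun ω => g (y ω)) ⁻¹' {j}
  have mA : ∀ i, MeasurableSet[MA] (A i) := fun i => (hf.comp hx) (measurableSet_singleton i)
  have mB : ∀ i, MeasurableSet[MB] (B i) := fun i => (hg.comp hy) (measurableSet_singleton i)
  have hμ : ∀ ij : Fin I × Fin J, μ.real ((f ⁻¹' {ij.1}) ×ˢ (g ⁻¹' {ij.2}))
      = (P (A ij.1 ∩ B ij.2)).toReal := by
    intro ij
    rw [Measure.real, Measure.map_apply (hx'.prodMk hy')
      ((hf (measurableSet_singleton _)).prod (hg (measurableSet_singleton _)))]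
    rfl
  have hν : ∀ ij : Fin I × Fin J, ν.real ((f ⁻¹' {ij.1}) ×ˢ (g ⁻¹' {ij.2}))
      = (P (A ij.1)).toReal * (P (B ij.2)).toReal := by
    intro ij
    rw [Measure.real, Measure.prod_prod, Measure.map_apply hx' (hf (measurableSet_singleton _)),
      Measure.map_apply hy' (hg (measurableSet_singleton _)), ENNReal.toReal_mul]
    rfl
  have hbeta : 2⁻¹ * ∑ i, ∑ j, |(P (A i ∩ B j)).toReal - (P (A i)).toReal * (P (B j)).toReal|
      ≤ betaCoef P MA MB := by
    refine le_csSup ⟨1, betaCoef_bddAbove MA MB P hMA hMB⟩ ⟨I, J, A, B, mA, mB, ?_, ?_, ?_, ?_, rfl⟩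
    · intro i i' h
      exact Disjoint.preimage _ (Set.disjoint_singleton.2 h)
    · intro i i' h
      exact Disjoint.preimage _ (Set.disjoint_singleton.2 h)
    · ext ω; simp [A]
    · ext ω; simp [B]
  set q : Fin I × Fin J → ℝ := fun ij =>
    (P (A ij.1 ∩ B ij.2)).toReal - (P (A ij.1)).toReal * (P (B ij.2)).toReal with hq
  have hdiff : ∀ D : Finset (Fin I × Fin J), ∑ ij ∈ D, q ij
      = μ.real {z | (f z.1, g z.2) ∈ D} - ν.real {z | (f z.1, g z.2) ∈ D} := by
    intro D
    rw [← grid_sum μ f g hf hg D, ← grid_sum ν f g hf hg D, ← Finset.sum_sub_distrib]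
    exact Finset.sum_congr rfl fun ij _ => by rw [hμ, hν]
  have h0 : ∑ ij, q ij = 0 := by
    rw [hdiff Finset.univ]; simp
  have h1 : ∑ ij ∈ D, q ij ≤ ∑ ij, (|q ij| + q ij) / 2 := by
    calc _ ≤ ∑ ij ∈ D, (|q ij| + q ij) / 2 :=
          Finset.sum_le_sum fun ij _ => by linarith [le_abs_self (q ij)]
      _ ≤ _ := Finset.sum_le_sum_of_subset_of_nonneg (Finset.subset_univ _)
          fun ij _ _ => by linarith [neg_abs_le (q ij)]
  rw [← Finset.sum_div, Finset.sum_add_distrib, h0, Fintype.sum_prod_type, hdiff D] at h1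
  simp only [hq] at h1
  linarith

/-- The algebra of grid sets. -/
def gridSets (X Y : Type*) [MeasurableSpace X] [MeasurableSpace Y] : Set (Set (X × Y)) :=
  {s | ∃ (I J : ℕ) (f : X → Fin I) (g : Y → Fin J) (D : Finset (Fin I × Fin J)),
    Measurable f ∧ Measurable g ∧ s = {z | (f z.1, g z.2) ∈ D}}

lemma gridSets_of_finite {X Y : Type*} [MeasurableSpace X] [MeasurableSpace Y]
    {U V : Type} [Fintype U] [Fintype V] [MeasurableSpace U] [MeasurableSpace V]
    [DiscreteMeasurableSpace U] [DiscreteMeasurableSpace V]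
    (f : X → U) (g : Y → V) (hf : Measurable f) (hg : Measurable g) (D : Set (U × V)) :
    {z : X × Y | (f z.1, g z.2) ∈ D} ∈ gridSets X Y := by
  classical
  refine ⟨Fintype.card U, Fintype.card V, fun u => Fintype.equivFin U (f u),
    fun v => Fintype.equivFin V (g v),
    Finset.univ.filter fun ij => ((Fintype.equivFin U).symm ij.1, (Fintype.equivFin V).symm ij.2) ∈ D,
    (measurable_of_countable _).comp hf, (measurable_of_countable _).comp hg, ?_⟩
  ext z; simp

lemma gridSets_isSetAlgebra (X Y : Type*) [MeasurableSpace X] [MeasurableSpace Y] :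
    IsSetAlgebra (gridSets X Y) where
  empty_mem := by
    have := gridSets_of_finite (X := X) (Y := Y) (fun _ => ()) (fun _ => ()) measurable_const
      measurable_const ∅
    simpa using this
  compl_mem := by
    rintro s ⟨I, J, f, g, D, hf, hg, rfl⟩
    exact gridSets_of_finite f g hf hg (↑D)ᶜ
  union_mem := by
    rintro s t ⟨I, J, f, g, D, hf, hg, rfl⟩ ⟨I', J', f', g', D', hf', hg', rfl⟩
    exact gridSets_of_finite (fun u => (f u, f' u)) (fun v => (g v, g' v)) (hf.prodMk hf')
      (hg.prodMk hg') {z | (z.1.1, z.2.1) ∈ D ∨ (z.1.2, z.2.2) ∈ D'}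

lemma gridSets_generate (X Y : Type*) [MeasurableSpace X] [MeasurableSpace Y] :
    (inferInstance : MeasurableSpace (X × Y)) = MeasurableSpace.generateFrom (gridSets X Y) := by
  classical
  apply le_antisymm
  · rw [← generateFrom_prod]
    refine MeasurableSpace.generateFrom_mono ?_
    rintro _ ⟨s, hs, t, ht, rfl⟩
    have := gridSets_of_finite (X := X) (Y := Y) (fun u => decide (u ∈ s)) (fun v => decide (v ∈ t))
      (measurable_to_bool (by
        have : (fun u => decide (u ∈ s)) ⁻¹' {true} = s := by ext; simp
        rw [this]; exact hs))
      (measurable_to_bool (by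
        have : (fun u => decide (u ∈ t)) ⁻¹' {true} = t := by ext; simp
        rw [this]; exact ht)) {(true, true)}
    convert this using 1
    ext z; simp
  · refine MeasurableSpace.generateFrom_le ?_
    rintro _ ⟨I, J, f, g, D, hf, hg, rfl⟩
    have : Measurable fun z : X × Y => (f z.1, g z.2) := by fun_prop
    exact this (Set.Finite.measurableSet D.finite_toSet)

/-- The β-mixing coefficient controls the total variation distance to the product law. -/
lemma beta_TV {Ω X Y : Type*} (MA MB : MeasurableSpace Ω) [mΩ : MeasurableSpace Ω]
    [MeasurableSpace X] [MeasurableSpace Y]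
    (P : Measure Ω) [IsProbabilityMeasure P] (hMA : MA ≤ mΩ)
    (hMB : MB ≤ mΩ) (x : Ω → X) (y : Ω → Y) (hx : Measurable[MA] x) (hy : Measurable[MB] y)
    (b : ℝ) (hb : betaCoef P MA MB ≤ b) :
    TVle (P.map fun ω => (x ω, y ω)) ((P.map x).prod (P.map y)) (ENNReal.ofReal b) := by
  have hx' : Measurable x := hx.mono hMA le_rfl
  have hy' : Measurable y := hy.mono hMB le_rfl
  have : IsProbabilityMeasure (P.map x) := Measure.isProbabilityMeasure_map hx'.aemeasurable
  have : IsProbabilityMeasure (P.map y) := Measure.isProbabilityMeasure_map hy'.aemeasurable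
  have : IsProbabilityMeasure (P.map fun ω => (x ω, y ω)) :=
    Measure.isProbabilityMeasure_map (hx'.prodMk hy').aemeasurable
  have grid := @beta_grid _ _ _ MA MB _ _ _ P _ hMA hMB x y hx hy
  set μ := P.map fun ω => (x ω, y ω)
  set ν := (P.map x).prod (P.map y)
  refine TVle.of_sets fun s hs => ?_
  have hreal : μ.real s ≤ ν.real s + b := by
    refine le_of_forall_pos_le_add fun ε hε => ?_
    obtain ⟨t, ⟨I, J, f, g, D, hf, hg, ht⟩, hst⟩ :=
      exists_measure_symmDiff_lt_of_generateFrom_isSetRing (μ := μ + ν)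
        (gridSets_isSetAlgebra X Y).isSetRing
        ⟨{Set.univ}, Set.countable_singleton _, by
          simpa using (gridSets_isSetAlgebra X Y).univ_mem, by simp⟩
        (gridSets_generate X Y) hs (ε := ENNReal.ofReal (ε / 2)) (by simpa using hε)
    have htm : MeasurableSet t := by
      rw [ht]
      have : Measurable fun z : X × Y => (f z.1, g z.2) := by fun_prop
      exact this (Set.Finite.measurableSet D.finite_toSet)
    have h1 : μ.real (symmDiff t s) ≤ ε / 2 := by
      refine ENNReal.toReal_le_of_le_ofReal (by linarith) ?_
      exact (le_self_add (a := μ (symmDiff t s)) (b := ν (symmDiff t s))).trans hst.le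
    have h2 : ν.real (symmDiff t s) ≤ ε / 2 := by
      refine ENNReal.toReal_le_of_le_ofReal (by linarith) ?_
      exact (le_add_self (a := ν (symmDiff t s)) (b := μ (symmDiff t s))).trans hst.le
    have h3 := abs_measureReal_sub_le_measureReal_symmDiff (μ := μ) htm.nullMeasurableSet
      hs.nullMeasurableSet
    have h4 := abs_measureReal_sub_le_measureReal_symmDiff (μ := ν) htm.nullMeasurableSet
      hs.nullMeasurableSet
    have h5 := grid f g hf hg D
    rw [← ht] at h5
    rw [abs_le] at h3 h4
    linarith [h3.1, h4.2]
  calc μ s = ENNReal.ofReal (μ.real s) := by simp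
    _ ≤ ENNReal.ofReal (ν.real s + b) := ENNReal.ofReal_le_ofReal hreal
    _ ≤ ENNReal.ofReal (ν.real s) + ENNReal.ofReal b := ENNReal.ofReal_add_le
    _ = _ := by simp

/-- Consequence of the mixing hypothesis. -/
lemma process_TV {Ω E X Y : Type*} [mΩ : MeasurableSpace Ω] [MeasurableSpace E]
    [MeasurableSpace X] [MeasurableSpace Y]
    (P : Measure Ω) [IsProbabilityMeasure P] (B : ℕ → Ω → E) (hB : ∀ t, Measurable (B t))
    (k m : ℕ) (b : ℝ) (hb : processBetaMix P B k ≤ b)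
    (x : Ω → X) (y : Ω → Y)
    (hx : Measurable[⨆ t ∈ Set.Iic m, MeasurableSpace.comap (B t) inferInstance] x)
    (hy : Measurable[⨆ t ∈ Set.Ici (m + k), MeasurableSpace.comap (B t) inferInstance] y) :
    TVle (P.map fun ω => (x ω, y ω)) ((P.map x).prod (P.map y)) (ENNReal.ofReal b) := by
  have hle : ∀ s : Set ℕ, (⨆ t ∈ s, MeasurableSpace.comap (B t) inferInstance) ≤ mΩ := fun s =>
    iSup₂_le fun t _ => (hB t).comap_le
  refine beta_TV _ _ P (hle _) (hle _) x y hx hy b (le_trans ?_ hb)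
  unfold processBetaMix
  refine le_ciSup (f := fun m : ℕ => betaCoef P
    (⨆ t ∈ Set.Iic m, MeasurableSpace.comap (B t) inferInstance)
    (⨆ t ∈ Set.Ici (m + k), MeasurableSpace.comap (B t) inferInstance)) ⟨1, ?_⟩ m
  rintro _ ⟨m, rfl⟩
  exact betaCoef_le_one _ _ P (hle _) (hle _)

/-! ### Part C: the process -/

lemma cond_indep_law {Ω H Rst B S : Type*} [MeasurableSpace Ω] [MeasurableSpace H]
    [MeasurableSpace Rst] [MeasurableSpace B] [StandardBorelSpace B] [Nonempty B]
    [MeasurableSpace S] (P : Measure Ω) [IsProbabilityMeasure P] (r : Ω → Rst) (a : Ω → B)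
    (hr : Measurable r) (ha : Measurable a) (κ : Kernel S B) [IsMarkovKernel κ] (s : Rst → S)
    (hae : ∀ᵐ x ∂(P.map r), condDistrib a r P x = κ (s x))
    (h : Ω → H) (g : Rst → H) (hg : Measurable g) (hh : ∀ ω, h ω = g (r ω))
    (c : H → S) (hc : Measurable c) (hcg : ∀ ω, c (h ω) = s (r ω)) (hs : Measurable s) :
    P.map (fun ω => (h ω, a ω)) = (P.map h) ⊗ₘ (κ.comap c hc) := by
  obtain rfl : h = fun ω => g (r ω) := funext hh
  have : IsProbabilityMeasure (P.map r) := Measure.isProbabilityMeasure_map hr.aemeasurable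
  have : IsProbabilityMeasure (P.map fun ω => g (r ω)) :=
    Measure.isProbabilityMeasure_map (hg.comp hr).aemeasurable
  refine Measure.ext_of_lintegral _ fun f hf => ?_
  have e1 : P.map (fun ω => (g (r ω), a ω))
      = (P.map fun ω => (r ω, a ω)).map fun z => (g z.1, z.2) := by
    rw [Measure.map_map (by fun_prop) (by fun_prop)]; rfl
  have hf' : Measurable fun z : Rst × B => f (g z.1, z.2) := by fun_prop
  rw [e1, ← compProd_map_condDistrib ha.aemeasurable, lintegral_map hf (by fun_prop),
    Measure.lintegral_compProd hf', Measure.lintegral_compProd hf]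
  have hm1 : Measurable fun x => ∫⁻ b, f (g x, b) ∂(κ (s x)) :=
    Measurable.lintegral_kernel_prod_right' (κ := κ.comap s hs) hf'
  have hm2 : Measurable fun x => ∫⁻ b, f (x, b) ∂(κ.comap c hc x) :=
    Measurable.lintegral_kernel_prod_right' (κ := κ.comap c hc) hf
  have e2 : ∫⁻ x, ∫⁻ b, f (g x, b) ∂(condDistrib a r P x) ∂(P.map r)
      = ∫⁻ x, ∫⁻ b, f (g x, b) ∂(κ (s x)) ∂(P.map r) := by
    refine lintegral_congr_ae ?_
    filter_upwards [hae] with x hx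
    rw [hx]
  rw [e2, lintegral_map hm1 hr, lintegral_map (g := fun ω => g (r ω)) hm2 (hg.comp hr)]
  refine lintegral_congr fun ω => ?_
  rw [Kernel.comap_apply, hcg]

lemma inv_compProd {X Y : Type*} [MeasurableSpace X] [MeasurableSpace Y] (μ : Measure X)
    [IsProbabilityMeasure μ] (κ κ' : Kernel X Y) [IsMarkovKernel κ] [IsMarkovKernel κ']
    (hae : ∀ᵐ x ∂μ, κ x = κ' x) (T : X → X) (hT : Measurable T) (hμ : μ.map T = μ)
    (hκ : ∀ x, κ' (T x) = κ' x) :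
    (μ ⊗ₘ κ).map (fun z => (T z.1, z.2)) = μ ⊗ₘ κ := by
  rw [Measure.compProd_congr hae]
  refine Measure.ext_of_lintegral _ fun f hf => ?_
  have hf' : Measurable fun z : X × Y => f (T z.1, z.2) := by fun_prop
  rw [lintegral_map hf (by fun_prop), Measure.lintegral_compProd hf', Measure.lintegral_compProd hf]
  have hm : Measurable fun x => ∫⁻ b, f (x, b) ∂(κ' x) :=
    Measurable.lintegral_kernel_prod_right' (κ := κ') hf
  conv_rhs => rw [← hμ, lintegral_map hm hT]
  simp only [hκ]

lemma inv_compProd_snd {X Y : Type*} [MeasurableSpace X] [MeasurableSpace Y] (μ : Measure X)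
    [IsProbabilityMeasure μ] (κ : Kernel X Y) [IsMarkovKernel κ] (T : Y → Y) (hT : Measurable T)
    (hae : ∀ᵐ x ∂μ, (κ x).map T = κ x) :
    (μ ⊗ₘ κ).map (fun z => (z.1, T z.2)) = μ ⊗ₘ κ := by
  refine Measure.ext_of_lintegral _ fun f hf => ?_
  have hf' : Measurable fun z : X × Y => f (z.1, T z.2) := by fun_prop
  rw [lintegral_map hf (by fun_prop), Measure.lintegral_compProd hf', Measure.lintegral_compProd hf]
  refine lintegral_congr_ae ?_
  filter_upwards [hae] with x hx
  conv_rhs => rw [← hx, lintegral_map (by fun_prop : Measurable fun b => f (x, b)) hT]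

lemma measurable_swapPair {p : ℕ} (E : Finset (Fin p)) :
    Measurable fun z : (Fin p → ℝ) × (Fin p → ℝ) => swapPair E z.1 z.2 := by
  unfold swapPair
  refine Measurable.prodMk (measurable_pi_lambda _ fun j => ?_) (measurable_pi_lambda _ fun j => ?_)
  · by_cases h : j ∈ E
    · simp only [h, if_true]; fun_prop
    · simp only [h, if_false]; fun_prop
  · by_cases h : j ∈ E
    · simp only [h, if_true]; fun_prop
    · simp only [h, if_false]; fun_prop

lemma prod_pi_swap {p : ℕ} (E : Finset (Fin p)) (μ : Fin p → Measure ℝ)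
    [∀ j, IsProbabilityMeasure (μ j)] :
    ((Measure.pi μ).prod (Measure.pi μ)).map (fun z => swapPair E z.1 z.2)
      = (Measure.pi μ).prod (Measure.pi μ) := by
  symm
  have hgen : MeasurableSpace.generateFrom
      (Set.pi Set.univ '' Set.pi Set.univ fun _ : Fin p => {s : Set ℝ | MeasurableSet s})
      = (inferInstance : MeasurableSpace (Fin p → ℝ)) := generateFrom_pi
  have hpi : IsPiSystem
      (Set.pi Set.univ '' Set.pi Set.univ fun _ : Fin p => {s : Set ℝ | MeasurableSet s}) :=
    isPiSystem_pi
  have hspan : (Measure.pi μ).FiniteSpanningSetsIn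
      (Set.pi Set.univ '' Set.pi Set.univ fun _ : Fin p => {s : Set ℝ | MeasurableSet s}) :=
    ⟨fun _ => Set.univ, fun _ => ⟨fun _ => Set.univ, fun _ _ => (by simp), by simp⟩,
      fun _ => by simp, by simp [Set.iUnion_const]⟩
  refine Measure.prod_eq_generateFrom hgen hgen hpi hpi hspan hspan ?_
  rintro _ ⟨s, hs, rfl⟩ _ ⟨t, ht, rfl⟩
  have hs' : ∀ j, MeasurableSet (s j) := fun j => hs j trivial
  have ht' : ∀ j, MeasurableSet (t j) := fun j => ht j trivial
  rw [Measure.map_apply (measurable_swapPair E)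
    ((MeasurableSet.univ_pi hs').prod (MeasurableSet.univ_pi ht'))]
  have : (fun z : (Fin p → ℝ) × (Fin p → ℝ) => swapPair E z.1 z.2) ⁻¹'
      (Set.univ.pi s ×ˢ Set.univ.pi t)
      = (Set.univ.pi fun j => if j ∈ E then t j else s j) ×ˢ
        (Set.univ.pi fun j => if j ∈ E then s j else t j) := by
    ext z
    simp only [swapPair, Set.mem_preimage, Set.mem_prod, Set.mem_pi, Set.mem_univ, true_imp_iff]
    rw [← forall_and, ← forall_and]
    refine forall_congr' fun j => ?_
    by_cases h : j ∈ E
    · simp only [h, if_true]; tauto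
    · simp only [h, if_false]
  rw [this, Measure.prod_prod, Measure.pi_pi, Measure.pi_pi, Measure.pi_pi, Measure.pi_pi,
    ← Finset.prod_mul_distrib, ← Finset.prod_mul_distrib]
  refine Finset.prod_congr rfl fun j _ => ?_
  by_cases h : j ∈ E
  · simp only [h, if_true]; rw [mul_comm]
  · simp only [h, if_false]

/-- A transition tuple (action, knockoff, state, (reward, next state)). -/
abbrev Tup (p : ℕ) (𝒮 : Type*) := (Fin p → ℝ) × (Fin p → ℝ) × 𝒮 × (ℝ × 𝒮)

/-- The swap acting on a transition tuple. -/
def swapTup {p : ℕ} {𝒮 : Type*} (E : Finset (Fin p)) (d : Tup p 𝒮) : Tup p 𝒮 :=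
  ((swapPair E d.1 d.2.1).1, (swapPair E d.1 d.2.1).2, d.2.2.1, d.2.2.2)

lemma measurable_swapTup {p : ℕ} {𝒮 : Type*} [MeasurableSpace 𝒮] (E : Finset (Fin p)) :
    Measurable (swapTup (𝒮 := 𝒮) E) := by
  have h : Measurable fun d : Tup p 𝒮 => swapPair E d.1 d.2.1 :=
    (measurable_swapPair E).comp (by fun_prop : Measurable fun d : Tup p 𝒮 => (d.1, d.2.1))
  have h1 : Measurable fun d : Tup p 𝒮 => d.2.2.1 := by fun_prop
  have h2 : Measurable fun d : Tup p 𝒮 => d.2.2.2 := by fun_prop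
  exact h.fst.prodMk (h.snd.prodMk (h1.prodMk h2))

/-- Exchangeability of null coordinates in a single tuple. -/
lemma tuple_swap_invariant {p : ℕ} {Ω 𝒮 : Type*} [MeasurableSpace Ω]
    [MeasurableSpace 𝒮] [StandardBorelSpace 𝒮] [Nonempty 𝒮]
    (P : Measure Ω) [IsProbabilityMeasure P] (G E : Finset (Fin p)) (hE : ∀ j ∈ E, j ∉ G)
    (S : Ω → 𝒮) (A A' : Ω → Fin p → ℝ) (Y : Ω → ℝ × 𝒮)
    (hS : Measurable S) (hA : Measurable A) (hA' : Measurable A') (hYm : Measurable Y)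
    (κ : Fin p → Kernel 𝒮 ℝ) (hκ : ∀ j, IsMarkovKernel (κ j))
    (hcond : ∀ᵐ s ∂(P.map S), condDistrib (fun ω => (A ω, A' ω)) S P s
        = (Measure.pi fun j => κ j s).prod (Measure.pi fun j => κ j s))
    (ν : Kernel (𝒮 × ({j : Fin p // j ∈ G} → ℝ)) (ℝ × 𝒮)) (hν : IsMarkovKernel ν)
    (hY : ∀ᵐ x ∂(P.map fun ω => (S ω, A ω, A' ω)),
      condDistrib Y (fun ω => (S ω, A ω, A' ω)) P x
        = ν (x.1, fun j : {j : Fin p // j ∈ G} => x.2.1 j.1)) :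
    MeasurePreserving (swapTup E) (P.map fun ω => ((A ω, A' ω, S ω, Y ω) : Tup p 𝒮))
      (P.map fun ω => ((A ω, A' ω, S ω, Y ω) : Tup p 𝒮)) := by
  refine ⟨measurable_swapTup E, ?_⟩
  have : IsProbabilityMeasure (P.map S) := Measure.isProbabilityMeasure_map hS.aemeasurable
  set L3 := P.map fun ω => (S ω, A ω, A' ω) with hL3
  have : IsProbabilityMeasure L3 :=
    Measure.isProbabilityMeasure_map (hS.prodMk (hA.prodMk hA')).aemeasurable
  set T : 𝒮 × (Fin p → ℝ) × (Fin p → ℝ) → 𝒮 × (Fin p → ℝ) × (Fin p → ℝ) :=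
    fun z => (z.1, swapPair E z.2.1 z.2.2) with hTdef
  have hT : Measurable T := measurable_fst.prodMk ((measurable_swapPair E).comp measurable_snd)
  have h3 : L3.map T = L3 := by
    have e' : L3 = P.map S ⊗ₘ condDistrib (fun ω => (A ω, A' ω)) S P :=
      (compProd_map_condDistrib (hA.prodMk hA').aemeasurable).symm
    rw [e']
    refine inv_compProd_snd _ _ (fun z => swapPair E z.1 z.2) (measurable_swapPair E) ?_
    filter_upwards [hcond] with s hs
    rw [hs]
    exact prod_pi_swap E fun j => κ j s
  have hc : Measurable fun x : 𝒮 × (Fin p → ℝ) × (Fin p → ℝ) =>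
      (x.1, fun j : {j : Fin p // j ∈ G} => x.2.1 j.1) := by fun_prop
  have h4 := inv_compProd L3 (condDistrib Y (fun ω => (S ω, A ω, A' ω)) P) (ν.comap _ hc)
    (by filter_upwards [hY] with x hx; rw [hx]; rfl) T hT h3 (by
      intro x
      rw [Kernel.comap_apply, Kernel.comap_apply]
      congr 2
      funext j
      have : j.1 ∉ E := fun h => hE _ h j.2
      simp [hTdef, swapPair, this])
  rw [hL3, compProd_map_condDistrib hYm.aemeasurable] at h4
  set F : (𝒮 × (Fin p → ℝ) × (Fin p → ℝ)) × (ℝ × 𝒮) → Tup p 𝒮 :=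
    fun z => (z.1.2.1, z.1.2.2, z.1.1, z.2) with hF
  have hFm : Measurable F := by fun_prop
  have hFL : P.map (fun ω => ((A ω, A' ω, S ω, Y ω) : Tup p 𝒮))
      = (P.map fun ω => ((S ω, A ω, A' ω), Y ω)).map F := by
    rw [Measure.map_map hFm (by fun_prop)]; rfl
  rw [hFL]
  conv_rhs => rw [← h4]
  rw [Measure.map_map (measurable_swapTup E) hFm, Measure.map_map hFm (by fun_prop)]
  rfl

/-! ### Part D: independence of the fold up to mixing error -/

lemma TVle.mono {E : Type*} [MeasurableSpace E] {μ ν : Measure E} {δ δ' : ℝ≥0∞}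
    (h : TVle μ ν δ) (hδ : δ ≤ δ') : TVle μ ν δ' := fun f hf h1 =>
  (h f hf h1).trans (by gcongr)

lemma TVle.swap_law {Ω X Y : Type*} [MeasurableSpace Ω] [MeasurableSpace X] [MeasurableSpace Y]
    (P : Measure Ω) [IsProbabilityMeasure P] {δ : ℝ≥0∞} (x : Ω → X) (y : Ω → Y)
    (hx : Measurable x) (hy : Measurable y)
    (h : TVle (P.map fun ω => (x ω, y ω)) ((P.map x).prod (P.map y)) δ) :
    TVle (P.map fun ω => (y ω, x ω)) ((P.map y).prod (P.map x)) δ := by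
  have : IsProbabilityMeasure (P.map x) := Measure.isProbabilityMeasure_map hx.aemeasurable
  have : IsProbabilityMeasure (P.map y) := Measure.isProbabilityMeasure_map hy.aemeasurable
  have := h.map measurable_swap
  rw [Measure.prod_swap, Measure.map_map measurable_swap (hx.prodMk hy)] at this
  exact this

lemma TVle.map_law {Ω X Y X' Y' : Type*} [MeasurableSpace Ω] [MeasurableSpace X]
    [MeasurableSpace Y] [MeasurableSpace X'] [MeasurableSpace Y']
    (P : Measure Ω) [IsProbabilityMeasure P] {δ : ℝ≥0∞} (x : Ω → X) (y : Ω → Y)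
    (hx : Measurable x) (hy : Measurable y) (f : X → X') (g : Y → Y') (hf : Measurable f)
    (hg : Measurable g)
    (h : TVle (P.map fun ω => (x ω, y ω)) ((P.map x).prod (P.map y)) δ) :
    TVle (P.map fun ω => (f (x ω), g (y ω)))
      ((P.map fun ω => f (x ω)).prod (P.map fun ω => g (y ω))) δ := by
  have : IsProbabilityMeasure (P.map x) := Measure.isProbabilityMeasure_map hx.aemeasurable
  have : IsProbabilityMeasure (P.map y) := Measure.isProbabilityMeasure_map hy.aemeasurable
  have := h.map (hf.prodMap hg)
  rw [← Measure.map_prod_map _ _ hf hg, Measure.map_map (hf.prodMap hg) (hx.prodMk hy),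
    Measure.map_map hf hx, Measure.map_map hg hy] at this
  exact this

lemma extend_step {Ω X Y Rst B S : Type*} [MeasurableSpace Ω] [MeasurableSpace X]
    [MeasurableSpace Y]
    [MeasurableSpace Rst] [MeasurableSpace B] [StandardBorelSpace B] [Nonempty B]
    [MeasurableSpace S] (P : Measure Ω) [IsProbabilityMeasure P] {δ : ℝ≥0∞}
    (r : Ω → Rst) (a : Ω → B)
    (hr : Measurable r) (ha : Measurable a) (κ : Kernel S B) [IsMarkovKernel κ] (s : Rst → S)
    (hs : Measurable s)
    (hae : ∀ᵐ x ∂(P.map r), condDistrib a r P x = κ (s x))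
    (x : Ω → X) (gx : Rst → X) (hgx : Measurable gx) (hx : ∀ ω, x ω = gx (r ω))
    (y : Ω → Y) (gy : Rst → Y) (hgy : Measurable gy) (hy : ∀ ω, y ω = gy (r ω))
    (c : X → S) (hc : Measurable c) (hcx : ∀ ω, c (x ω) = s (r ω))
    (h : TVle (P.map fun ω => (x ω, y ω)) ((P.map x).prod (P.map y)) δ) :
    TVle (P.map fun ω => ((x ω, a ω), y ω)) ((P.map fun ω => (x ω, a ω)).prod (P.map y)) δ := by
  have hxm : Measurable x := by
    rw [show x = fun ω => gx (r ω) from funext hx]; exact hgx.comp hr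
  have hym : Measurable y := by
    rw [show y = fun ω => gy (r ω) from funext hy]; exact hgy.comp hr
  refine TVle.extend P x y a hxm hym ha (κ.comap c hc) h ?_ ?_
  · have := cond_indep_law P r a hr ha κ s hae (fun ω => (x ω, y ω)) (fun z => (gx z, gy z))
      (hgx.prodMk hgy) (fun ω => by rw [hx, hy]) (fun z => c z.1) (hc.comp measurable_fst) hcx hs
    rw [this]
    rfl
  · exact cond_indep_law P r a hr ha κ s hae x gx hgx hx c hc hcx hs

/-- The remaining variable at time `t`. -/
def restVar {Ω E B : Type*} (b : ℕ → Ω → E) (A' : ℕ → Ω → B) (t : ℕ) (ω : Ω) :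
    (ℕ → E) × ({t' : ℕ // t' ≠ t} → B) := (fun t' => b t' ω, fun t' => A' t'.1 ω)

lemma extend_many {Ω E X Y B S : Type*} [MeasurableSpace Ω] [MeasurableSpace X]
    [MeasurableSpace Y] [MeasurableSpace E]
    [MeasurableSpace B] [StandardBorelSpace B] [Nonempty B]
    [MeasurableSpace S] (P : Measure Ω) [IsProbabilityMeasure P] {δ : ℝ≥0∞}
    (b : ℕ → Ω → E) (A' : ℕ → Ω → B) (s : E → S) (hs : Measurable s)
    (hb : ∀ t, Measurable (b t)) (hA' : ∀ t, Measurable (A' t))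
    (κ : ℕ → Kernel S B) (hκ : ∀ t, IsMarkovKernel (κ t))
    (hae : ∀ t, ∀ᵐ x ∂(P.map fun ω => (s (b t ω), restVar b A' t ω)),
      condDistrib (A' t) (fun ω => (s (b t ω), restVar b A' t ω)) P x = κ t x.1)
    (τ : ℕ → ℕ) (hτ : Function.Injective τ) (M : ℕ)
    (gx : (ℕ → E) → X) (hgx : Measurable gx) (gy : (ℕ → E) → Y) (hgy : Measurable gy)
    (c : Fin M → X → S) (hc : ∀ i, Measurable (c i))
    (hcx : ∀ i ω, c i (gx fun t => b t ω) = s (b (τ i) ω))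
    (h : TVle (P.map fun ω => (gx fun t => b t ω, gy fun t => b t ω))
      ((P.map fun ω => gx fun t => b t ω).prod (P.map fun ω => gy fun t => b t ω)) δ)
    (m : ℕ) (hm : m ≤ M) :
    TVle (P.map fun ω => (((fun i : Fin m => A' (τ i) ω), gx fun t => b t ω), gy fun t => b t ω))
      ((P.map fun ω => ((fun i : Fin m => A' (τ i) ω), gx fun t => b t ω)).prod
        (P.map fun ω => gy fun t => b t ω)) δ := by
  have hbm : Measurable fun ω => fun t => b t ω := measurable_pi_lambda _ hb
  have hx : Measurable fun ω => gx fun t => b t ω := hgx.comp hbm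
  have hy : Measurable fun ω => gy fun t => b t ω := hgy.comp hbm
  have hAm : ∀ m : ℕ, Measurable fun ω => fun i : Fin m => A' (τ i) ω := fun m =>
    measurable_pi_lambda _ fun i => hA' _
  induction m with
  | zero =>
    have := h.map_law P _ _ hx hy (fun x => ((fun i : Fin 0 => i.elim0 : Fin 0 → B), x)) id
      (by fun_prop) measurable_id
    have e : ∀ ω, (fun i : Fin 0 => A' (τ i) ω) = (fun i : Fin 0 => i.elim0 : Fin 0 → B) :=
      fun ω => funext fun i => i.elim0
    simp only [e]
    exact this
  | succ m ih =>
    have ih := ih (by omega)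
    have hr : Measurable fun ω => (s (b (τ m) ω), restVar b A' (τ m) ω) :=
      (hs.comp (hb _)).prodMk (hbm.prodMk (measurable_pi_lambda _ fun t => hA' _))
    have hne : ∀ i : Fin m, τ i ≠ τ m := fun i h => absurd (hτ h) (by omega)
    have step := extend_step P _ (A' (τ m)) hr (hA' _) (κ (τ m)) Prod.fst measurable_fst
      (hae (τ m)) _
      (fun z => ((fun i : Fin m => z.2.2 ⟨τ i, hne i⟩), gx z.2.1))
      ((measurable_pi_lambda _ fun i => by fun_prop).prodMk
        (hgx.comp (by fun_prop))) (fun ω => rfl) _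
      (fun z => gy z.2.1) (hgy.comp (by fun_prop)) (fun ω => rfl)
      (fun x => c ⟨m, hm⟩ x.2) ((hc _).comp measurable_snd) (fun ω => hcx ⟨m, hm⟩ ω) ih
    have := step.map_law P _ _ (((hAm m).prodMk hx).prodMk (hA' _)) hy
      (fun z : ((Fin m → B) × X) × B => ((fun i : Fin (m+1) =>
        if hi : i.1 < m then z.1.1 ⟨i, hi⟩ else z.2), z.1.2)) id
      (by
        refine Measurable.prodMk (measurable_pi_lambda _ fun i => ?_) (by fun_prop)
        by_cases hi : i.1 < m
        · simp only [hi, dif_pos]; fun_prop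
        · simp only [hi, dif_neg, not_false_eq_true]; fun_prop) measurable_id
    have e : ∀ ω, (fun i : Fin (m+1) => A' (τ i) ω)
        = fun i : Fin (m+1) => if hi : i.1 < m then A' (τ i) ω else A' (τ m) ω := by
      intro ω; funext i
      split_ifs with hi
      · rfl
      · rw [show (i : ℕ) = m by omega]
    simp only [e]
    exact this

lemma measurable_sub_comp {Ω E V : Type*} [MeasurableSpace Ω] [MeasurableSpace E]
    [MeasurableSpace V] (f g : Ω → E) (hf : Measurable f) (hg : Measurable g) (bt : E × E → V)
    (hbt : Measurable bt) : Measurable fun ω => bt (f ω, g ω) := hbt.comp (hf.prodMk hg)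

lemma measurable_sub_pi {Ω V ι : Type*} [MeasurableSpace Ω]
    [MeasurableSpace V] (f : ι → Ω → V) (hf : ∀ i, Measurable (f i)) :
    Measurable fun ω i => f i ω := measurable_pi_lambda _ hf

lemma measurable_sub_mem {Ω E : Type*} [mE : MeasurableSpace E] (b : ℕ → Ω → E) (s : Set ℕ) (t : ℕ)
    (ht : t ∈ s) : Measurable[⨆ t ∈ s, MeasurableSpace.comap (b t) inferInstance] (b t) :=
  Measurable.of_comap_le (le_iSup₂ (f := fun t (_ : t ∈ s) => MeasurableSpace.comap (b t) mE) t ht)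

lemma fold_TV {Ω E V Z B S : Type*} [MeasurableSpace Ω] [MeasurableSpace V]
    [MeasurableSpace Z] [MeasurableSpace E]
    [MeasurableSpace B] [StandardBorelSpace B] [Nonempty B]
    [MeasurableSpace S] (P : Measure Ω) [IsProbabilityMeasure P] (ρ : ℝ)
    (b : ℕ → Ω → E) (A' : ℕ → Ω → B) (s : E → S) (hs : Measurable s)
    (hb : ∀ t, Measurable (b t)) (hA' : ∀ t, Measurable (A' t))
    (κ : ℕ → Kernel S B) (hκ : ∀ t, IsMarkovKernel (κ t))
    (hae : ∀ t, ∀ᵐ x ∂(P.map fun ω => (s (b t ω), restVar b A' t ω)),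
      condDistrib (A' t) (fun ω => (s (b t ω), restVar b A' t ω)) P x = κ t x.1)
    (hmix : ∀ k : ℕ, processBetaMix P b k ≤ ρ ^ k)
    (bt : E × E → V) (hbt : Measurable bt) (zmk : V × B → Z) (hz : Measurable zmk)
    (sV : V → S) (hsV : Measurable sV) (hsbt : ∀ e, sV (bt e) = s e.1)
    (k K : ℕ) (hK : 0 < K) (M : ℕ) :
    TVle (P.map fun ω => fun i : Fin (M + 1) =>
        zmk (bt (b (k + i * K) ω, b (k + i * K + 1) ω), A' (k + i * K) ω))
      (Measure.pi fun i : Fin (M + 1) => P.map fun ω =>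
        zmk (bt (b (k + i * K) ω, b (k + i * K + 1) ω), A' (k + i * K) ω))
      (M * ENNReal.ofReal (ρ ^ (K - 1))) := by
  set τ : ℕ → ℕ := fun i => k + i * K with hτdef
  have hτ : Function.Injective τ := by
    intro i j hij
    have : i * K = j * K := by simpa [hτdef] using hij
    exact Nat.eq_of_mul_eq_mul_right hK this
  have hbtm : ∀ t, Measurable fun ω => bt (b t ω, b (t+1) ω) := fun t =>
    hbt.comp ((hb _).prodMk (hb _))
  have hZm : ∀ t, Measurable fun ω => zmk (bt (b t ω, b (t+1) ω), A' t ω) := fun t =>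
    hz.comp ((hbtm t).prodMk (hA' t))
  have hZp : ∀ t, IsProbabilityMeasure (P.map fun ω => zmk (bt (b t ω, b (t+1) ω), A' t ω)) :=
    fun t => Measure.isProbabilityMeasure_map (hZm t).aemeasurable
  have hbm : Measurable fun ω => fun t => b t ω := measurable_pi_lambda _ hb
  change TVle (P.map fun ω => fun i : Fin (M + 1) =>
        zmk (bt (b (τ i) ω, b (τ i + 1) ω), A' (τ i) ω))
      (Measure.pi fun i : Fin (M + 1) => P.map fun ω =>
        zmk (bt (b (τ i) ω, b (τ i + 1) ω), A' (τ i) ω)) _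
  induction M with
  | zero =>
    have : Measure.pi (fun i : Fin (0 + 1) => P.map fun ω =>
        zmk (bt (b (τ i) ω, b (τ i + 1) ω), A' (τ i) ω))
        = P.map fun ω => fun i : Fin (0 + 1) =>
          zmk (bt (b (τ i) ω, b (τ i + 1) ω), A' (τ i) ω) := by
      refine Measure.pi_eq fun s hs => ?_
      rw [Measure.map_apply (measurable_pi_lambda _ fun i => hZm _) (MeasurableSet.univ_pi hs)]
      simp only [Nat.reduceAdd, Finset.univ_unique, Finset.prod_singleton]
      rw [Measure.map_apply (hZm _) (hs _)]
      congr 1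
      ext ω
      simp [Set.mem_pi, Fin.forall_fin_one]
    rw [this]
    intro f _ _
    exact le_self_add
  | succ M ih =>
    -- past and future
    have hU : Measurable fun p : ℕ → E => fun i : Fin (M + 1) => bt (p (τ i), p (τ i + 1)) :=
      measurable_pi_lambda _ fun i => hbt.comp (by fun_prop)
    have hV : Measurable fun p : ℕ → E => bt (p (τ (M+1)), p (τ (M+1) + 1)) :=
      hbt.comp (by fun_prop)
    have h0 := process_TV P b hb (K - 1) (τ M + 1) (ρ ^ (K - 1)) (hmix _)
      (fun ω => fun i : Fin (M + 1) => bt (b (τ i) ω, b (τ i + 1) ω))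
      (fun ω => bt (b (τ (M+1)) ω, b (τ (M+1) + 1) ω))
      (by
        have hle : ∀ i : Fin (M+1), τ i ≤ τ M := fun i => by
          have : (i : ℕ) * K ≤ M * K := Nat.mul_le_mul_right K (by omega)
          simp only [hτdef]; omega
        refine @measurable_sub_pi _ _ _ (_) _ _ fun i => ?_
        exact @measurable_sub_comp _ _ _ (_) _ _ _ _
          (measurable_sub_mem b _ _ (by have := hle i; simp only [Set.mem_Iic]; omega))
          (measurable_sub_mem b _ _ (by have := hle i; simp only [Set.mem_Iic]; omega)) bt hbt)
      (by
        have hge : τ M + 1 + (K - 1) ≤ τ (M+1) := by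
          simp only [hτdef, Nat.add_mul, one_mul]; omega
        exact @measurable_sub_comp _ _ _ (_) _ _ _ _
          (measurable_sub_mem b _ _ (by simp only [Set.mem_Ici]; omega))
          (measurable_sub_mem b _ _ (by simp only [Set.mem_Ici]; omega)) bt hbt)
    have h1 := extend_many P b A' s hs hb hA' κ hκ hae τ hτ (M+1) _ hU _ hV
      (fun i u => sV (u i)) (fun i => hsV.comp (measurable_pi_apply i))
      (fun i ω => hsbt _) h0 (M+1) le_rfl
    have hAm : Measurable fun ω => fun i : Fin (M+1) => A' (τ i) ω :=
      measurable_pi_lambda _ fun i => hA' _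
    have h2 := h1.swap_law P _ _ (hAm.prodMk (hU.comp hbm)) (hV.comp hbm)
    have hr : Measurable fun ω => (s (b (τ (M+1)) ω), restVar b A' (τ (M+1)) ω) :=
      (hs.comp (hb _)).prodMk (hbm.prodMk (measurable_pi_lambda _ fun t => hA' _))
    have hne : ∀ i : Fin (M+1), τ i ≠ τ (M+1) := fun i h => absurd (hτ h) (by omega)
    have h3 := extend_step P _ (A' (τ (M+1))) hr (hA' _) (κ (τ (M+1))) Prod.fst measurable_fst
      (hae (τ (M+1))) _
      (fun z => bt (z.2.1 (τ (M+1)), z.2.1 (τ (M+1) + 1))) (hbt.comp (by fun_prop)) (fun ω => rfl) _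
      (fun z => ((fun i : Fin (M+1) => z.2.2 ⟨τ i, hne i⟩),
        fun i : Fin (M+1) => bt (z.2.1 (τ i), z.2.1 (τ i + 1))))
      ((measurable_pi_lambda _ fun i => by fun_prop).prodMk
        (hU.comp (by fun_prop))) (fun ω => rfl)
      sV hsV (fun ω => hsbt _) h2
    have h4 := h3.map_law P _ _ ((hV.comp hbm).prodMk (hA' _)) (hAm.prodMk (hU.comp hbm))
      zmk (fun z => fun i : Fin (M+1) => zmk (z.2 i, z.1 i)) hz
      (measurable_pi_lambda _ fun i => hz.comp (by fun_prop))
    refine TVle.fin_succ _ _ ?_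
    rw [Measure.map_map (by fun_prop) (measurable_pi_lambda _ fun i => hZm _)]
    have : IsProbabilityMeasure (P.map fun ω => fun i : Fin (M + 1) =>
        zmk (bt (b (τ i) ω, b (τ i + 1) ω), A' (τ i) ω)) :=
      Measure.isProbabilityMeasure_map (measurable_pi_lambda _ fun i => hZm _).aemeasurable
    have h5 := h4.trans (ih.prod_right (P.map fun ω =>
      zmk (bt (b (τ (M+1)) ω, b (τ (M+1) + 1) ω), A' (τ (M+1)) ω)))
    have h6 := h5.mono (δ' := ((M + 1 : ℕ) : ℝ≥0∞) * ENNReal.ofReal (ρ ^ (K - 1)))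
      (by push_cast; rw [add_mul, one_mul])
    exact h6

lemma error_bound (ρ k0 : ℝ) (hρ0 : 0 < ρ) (N T K : ℕ) (hN : 0 < N) (hT : 0 < T)
    (hK : 0 < K) (hKeq : (K : ℝ) = k0 * Real.log ((N : ℝ) * (T : ℝ))) :
    (N : ℝ) * (((T - 1) / K : ℕ) * ρ ^ (K - 1))
      ≤ ρ⁻¹ * (K : ℝ)⁻¹ * ((N : ℝ) * (T : ℝ)) ^ (-(-k0 * Real.log ρ - 1)) := by
  have hNT : (0 : ℝ) < (N : ℝ) * T := by positivity
  have hK' : (0 : ℝ) < K := by exact_mod_cast hK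
  have h1 : (((T - 1) / K : ℕ) : ℝ) ≤ T * (K : ℝ)⁻¹ := by
    refine Nat.cast_div_le.trans ?_
    rw [div_eq_mul_inv]
    gcongr
    omega
  have h2 : ρ ^ (K - 1) = ρ⁻¹ * ρ ^ K := by
    obtain ⟨m, rfl⟩ : ∃ m, K = m + 1 := ⟨K - 1, by omega⟩
    rw [pow_succ, Nat.add_sub_cancel]; field_simp
  have h3 : ρ ^ K = ((N : ℝ) * T) ^ (k0 * Real.log ρ) := by
    rw [← Real.rpow_natCast, Real.rpow_def_of_pos hρ0, Real.rpow_def_of_pos hNT, hKeq]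
    congr 1; ring
  have h4 : ((N : ℝ) * (T : ℝ)) ^ (-(-k0 * Real.log ρ - 1))
      = ((N : ℝ) * T) * ((N : ℝ) * T) ^ (k0 * Real.log ρ) := by
    rw [show -(-k0 * Real.log ρ - 1) = 1 + k0 * Real.log ρ by ring, Real.rpow_add hNT,
      Real.rpow_one]
  rw [h4, h2, h3]
  calc _ ≤ (N : ℝ) * (T * (K : ℝ)⁻¹ * (ρ⁻¹ * ((N : ℝ) * T) ^ (k0 * Real.log ρ))) := by gcongr
    _ = _ := by ring

/-- **Statement 10** (Theorem 1: mFDR control of knockoff-sampling in online RL).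
The environment process `{(S_t, A_t, R_t)}` is stationary and exponentially β-mixing with
rate `ρ`; at each step a knockoff action `Ã_t` is resampled conditionally on `S_t`,
independently of everything else, so that given `S_t` the `2p` coordinates of `(A_t, Ã_t)`
are mutually independent with matching coordinatewise conditional laws `κ_{t,j}(S_t, ·)`;
and `Y_t = (R_t, S_{t+1})` depends on `(S_t, A_t, Ã_t)` only through `S_t` and the nonnull
coordinates `A_{t,G}` (`H0 = Gᶜ` is the null set).  The buffer consists of `N` i.i.d.
trajectories of length `T` of this process, split into `K = k0 · log(NT)` folds by
`t mod K` (with `k0 > −1/log ρ`).  For any fold `k` and any measurable knockoff statistic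
`W` on the fold satisfying the flip-sign property, the knockoff selection at level `α`
satisfies `mFDR ≤ α + C · K⁻¹ (NT)^{−c}` with `c = −k0 log ρ − 1 > 0` and a constant `C`
independent of `N` and `T`. -/
theorem knockoff_sampling_mFDR_control
    {p : ℕ} {Ω 𝒮 : Type*} [MeasurableSpace Ω]
    [MeasurableSpace 𝒮] [StandardBorelSpace 𝒮] [Nonempty 𝒮]
    (P : Measure Ω) [IsProbabilityMeasure P]
    (H0 G : Finset (Fin p)) (hG : H0 = Gᶜ)
    (α ρ k0 : ℝ) (hα : 0 < α) (hα1 : α < 1) (hρ0 : 0 < ρ) (hρ1 : ρ < 1)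
    (hk0 : k0 > -1 / Real.log ρ)
    -- the generic environment process (S_t, A_t, R_t) and resampled knockoffs Ã_t
    (S : ℕ → Ω → 𝒮) (A : ℕ → Ω → Fin p → ℝ) (R : ℕ → Ω → ℝ)
    (A' : ℕ → Ω → Fin p → ℝ)
    (hS : ∀ t, Measurable (S t)) (hA : ∀ t, Measurable (A t))
    (hR : ∀ t, Measurable (R t)) (hA' : ∀ t, Measurable (A' t))
    -- stationarity of {(S_t, A_t, R_t)}
    (hstat : ∀ u : ℕ,
      P.map (fun ω => fun t : ℕ => (S (t + u) ω, A (t + u) ω, R (t + u) ω))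
        = P.map (fun ω => fun t : ℕ => (S t ω, A t ω, R t ω)))
    -- exponential β-mixing with rate ρ: β(k) ≤ ρ^k
    (hmix : ∀ k : ℕ,
      processBetaMix P (fun t ω => (S t ω, A t ω, R t ω)) k ≤ ρ ^ k)
    -- (i): conditionally on S_t, the 2p coordinates of (A_t, Ã_t) are mutually
    -- independent, the j-th coordinates of A_t and Ã_t both with law κ_{t,j}(S_t, ·)
    (κ : ℕ → Fin p → Kernel 𝒮 ℝ) (hκ : ∀ t j, IsMarkovKernel (κ t j))
    (hcond : ∀ t : ℕ, ∀ᵐ s ∂(P.map (S t)),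
      condDistrib (fun ω => (A t ω, A' t ω)) (S t) P s
        = (Measure.pi fun j => κ t j s).prod (Measure.pi fun j => κ t j s))
    -- (i): the knockoff Ã_t is drawn conditionally on S_t, independently of everything
    -- else (the whole base process and all other knockoffs)
    (hindep : ∀ t : ℕ, ∀ᵐ x ∂(P.map fun ω =>
        (S t ω, (fun t' : ℕ => (S t' ω, A t' ω, R t' ω),
          fun t' : {t' : ℕ // t' ≠ t} => A' t'.1 ω))),
      condDistrib (A' t)
        (fun ω => (S t ω, (fun t' : ℕ => (S t' ω, A t' ω, R t' ω),
          fun t' : {t' : ℕ // t' ≠ t} => A' t'.1 ω))) P x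
        = Measure.pi fun j => κ t j x.1)
    -- (ii): Y_t = (R_t, S_{t+1}) depends on (S_t, A_t, Ã_t) only through S_t and A_{t,G}
    (ν : Kernel (𝒮 × ({j : Fin p // j ∈ G} → ℝ)) (ℝ × 𝒮)) (hν : IsMarkovKernel ν)
    (hY : ∀ t : ℕ, ∀ᵐ x ∂(P.map fun ω => (S t ω, A t ω, A' t ω)),
      condDistrib (fun ω => (R t ω, S (t + 1) ω)) (fun ω => (S t ω, A t ω, A' t ω)) P x
        = ν (x.1, fun j : {j : Fin p // j ∈ G} => x.2.1 j.1)) :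
    0 < -k0 * Real.log ρ - 1 ∧
    ∃ C : ℝ, ∀ N T K : ℕ, 0 < N → 0 < T → 0 < K →
      (K : ℝ) = k0 * Real.log ((N : ℝ) * (T : ℝ)) →
      -- the buffer: N i.i.d. trajectories, each distributed as the generic process
      ∀ (tS : Fin N → ℕ → Ω → 𝒮) (tA tA' : Fin N → ℕ → Ω → Fin p → ℝ)
        (tR : Fin N → ℕ → Ω → ℝ),
        (∀ n t, Measurable (tS n t)) → (∀ n t, Measurable (tA n t)) →
        (∀ n t, Measurable (tA' n t)) → (∀ n t, Measurable (tR n t)) →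
        (P.map (fun ω => fun n : Fin N => fun t : ℕ =>
            (tS n t ω, tA n t ω, tA' n t ω, tR n t ω))
          = Measure.pi (fun _ : Fin N => P.map (fun ω => fun t : ℕ =>
              (S t ω, A t ω, A' t ω, R t ω)))) →
      -- fold k: all transition tuples (A_t, Ã_t, S_t, (R_t, S_{t+1})) with t ≡ k (mod K)
      ∀ (k : Fin K)
        (W : ((Fin N × {t : Fin T // (t : ℕ) % K = (k : ℕ)}) →
          (Fin p → ℝ) × (Fin p → ℝ) × 𝒮 × (ℝ × 𝒮)) → Fin p → ℝ),
        Measurable W →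
        -- flip-sign property of the knockoff statistic W on the fold data
        (∀ (E : Finset (Fin p))
          (d : (Fin N × {t : Fin T // (t : ℕ) % K = (k : ℕ)}) →
            (Fin p → ℝ) × (Fin p → ℝ) × 𝒮 × (ℝ × 𝒮)) (j : Fin p),
          W (fun i => ((swapPair E (d i).1 (d i).2.1).1, (swapPair E (d i).1 (d i).2.1).2,
              (d i).2.2.1, (d i).2.2.2)) j
            = if j ∈ E then - W d j else W d j) →
        ∫ ω, (fun Gh : Finset (Fin p) =>
            ((Gh ∩ H0).card : ℝ) / (1 / α + (Gh.card : ℝ)))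
            (knockoffSelect α (W (fun i =>
              (tA i.1 (i.2.1 : ℕ) ω, tA' i.1 (i.2.1 : ℕ) ω, tS i.1 (i.2.1 : ℕ) ω,
                (tR i.1 (i.2.1 : ℕ) ω, tS i.1 ((i.2.1 : ℕ) + 1) ω))))) ∂P
          ≤ α + C * (K : ℝ)⁻¹ * ((N : ℝ) * (T : ℝ)) ^ (-(-k0 * Real.log ρ - 1)) := by
  have hlog : Real.log ρ < 0 := Real.log_neg hρ0 hρ1
  refine ⟨?_, ρ⁻¹, ?_⟩
  · have : k0 * Real.log ρ < -1 := (div_lt_iff_of_neg hlog).1 hk0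
    linarith
  intro N T K hN hT hK hKeq tS tA tA' tR htS htA htA' htR hlaw k W hW hflip
  set M : ℕ := (T - 1) / K with hM
  -- the base process and the knockoff kernels
  set b : ℕ → Ω → 𝒮 × (Fin p → ℝ) × ℝ := fun t ω => (S t ω, A t ω, R t ω) with hb
  have hbm : ∀ t, Measurable (b t) := fun t => (hS t).prodMk ((hA t).prodMk (hR t))
  set κb : ℕ → Kernel 𝒮 (Fin p → ℝ) := fun t =>
    (condDistrib (fun ω => (A t ω, A' t ω)) (S t) P).map Prod.snd with hκb
  have hκbM : ∀ t, IsMarkovKernel (κb t) := fun t => Kernel.IsMarkovKernel.map _ measurable_snd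
  have hκbeq : ∀ t, ∀ᵐ s ∂(P.map (S t)), κb t s = Measure.pi fun j => κ t j s := by
    intro t
    filter_upwards [hcond t] with s hs
    rw [hκb]
    simp only
    rw [Kernel.map_apply _ measurable_snd, hs]
    have := Measure.snd_prod (μ := Measure.pi fun j => κ t j s) (ν := Measure.pi fun j => κ t j s)
    exact this
  have hrm : ∀ t, Measurable fun ω => (S t ω, restVar b A' t ω) := fun t =>
    (hS t).prodMk ((measurable_pi_lambda _ hbm).prodMk (measurable_pi_lambda _ fun t => hA' _))
  have hae : ∀ t, ∀ᵐ x ∂(P.map fun ω => (Prod.fst (b t ω), restVar b A' t ω)),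
      condDistrib (A' t) (fun ω => (Prod.fst (b t ω), restVar b A' t ω)) P x = κb t x.1 := by
    intro t
    have h1 : ∀ᵐ x ∂(P.map fun ω => (S t ω, restVar b A' t ω)),
        κb t x.1 = Measure.pi fun j => κ t j x.1 := by
      have h2 := hκbeq t
      have e : P.map (S t) = (P.map fun ω => (S t ω, restVar b A' t ω)).map Prod.fst := by
        rw [Measure.map_map measurable_fst (hrm t)]; rfl
      rw [e] at h2
      exact ae_of_ae_map measurable_fst.aemeasurable h2
    have h2 := hindep t
    change ∀ᵐ x ∂(P.map fun ω => (S t ω, restVar b A' t ω)),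
      condDistrib (A' t) (fun ω => (S t ω, restVar b A' t ω)) P x = _ at h2
    change ∀ᵐ x ∂(P.map fun ω => (S t ω, restVar b A' t ω)),
      condDistrib (A' t) (fun ω => (S t ω, restVar b A' t ω)) P x = _
    filter_upwards [h1, h2] with x hx1 hx2
    rw [hx1, hx2]
  -- transition tuples
  set Z : ℕ → Ω → Tup p 𝒮 := fun t ω => (A t ω, A' t ω, S t ω, (R t ω, S (t+1) ω)) with hZ
  have hZm : ∀ t, Measurable (Z t) := fun t =>
    (hA t).prodMk ((hA' t).prodMk ((hS t).prodMk ((hR t).prodMk (hS (t+1)))))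
  have hZp : ∀ t, IsProbabilityMeasure (P.map (Z t)) := fun t =>
    Measure.isProbabilityMeasure_map (hZm t).aemeasurable
  have hfold : TVle (P.map fun ω => fun i : Fin (M + 1) => Z (k + i * K) ω)
      (Measure.pi fun i : Fin (M + 1) => P.map (Z (k + i * K)))
      (M * ENNReal.ofReal (ρ ^ (K - 1))) :=
    fold_TV P ρ b A' Prod.fst measurable_fst hbm hA' κb hκbM hae hmix
      (fun e : (𝒮 × (Fin p → ℝ) × ℝ) × (𝒮 × (Fin p → ℝ) × ℝ) =>
        (e.1.2.1, e.1.1, e.1.2.2, e.2.1)) (by fun_prop)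
      (fun z : ((Fin p → ℝ) × 𝒮 × ℝ × 𝒮) × (Fin p → ℝ) =>
        ((z.1.1, z.2, z.1.2.1, (z.1.2.2.1, z.1.2.2.2)) : Tup p 𝒮)) (by fun_prop)
      (fun v => v.2.1) (by fun_prop) (fun e => rfl) k K hK M
  have hfm : Measurable fun ω => fun i : Fin (M + 1) => Z (k + i * K) ω :=
    measurable_pi_lambda _ fun i => hZm _
  have hfp : IsProbabilityMeasure (P.map fun ω => fun i : Fin (M + 1) => Z (k + i * K) ω) :=
    Measure.isProbabilityMeasure_map hfm.aemeasurable
  have hpi := TVle.pi_const hfold N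
  -- the law of the fold data
  set φ : (ℕ → 𝒮 × (Fin p → ℝ) × (Fin p → ℝ) × ℝ) → Fin (M + 1) → Tup p 𝒮 := fun x i =>
    ((x (k + i * K)).2.1, (x (k + i * K)).2.2.1, (x (k + i * K)).1,
      ((x (k + i * K)).2.2.2, (x (k + i * K + 1)).1)) with hφ
  have hφm : Measurable φ := measurable_pi_lambda _ fun i => by fun_prop
  have hpath : Measurable fun ω => fun t : ℕ => (S t ω, A t ω, A' t ω, R t ω) :=
    measurable_pi_lambda _ fun t => (hS t).prodMk ((hA t).prodMk ((hA' t).prodMk (hR t)))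
  have hpathp : IsProbabilityMeasure (P.map fun ω => fun t : ℕ => (S t ω, A t ω, A' t ω, R t ω)) :=
    Measure.isProbabilityMeasure_map hpath.aemeasurable
  set D : Ω → Fin N → Fin (M + 1) → Tup p 𝒮 := fun ω n =>
    φ (fun t => (tS n t ω, tA n t ω, tA' n t ω, tR n t ω)) with hD
  have htr : Measurable fun ω => fun n : Fin N => fun t : ℕ =>
      (tS n t ω, tA n t ω, tA' n t ω, tR n t ω) :=
    measurable_pi_lambda _ fun n => measurable_pi_lambda _ fun t =>
      (htS n t).prodMk ((htA n t).prodMk ((htA' n t).prodMk (htR n t)))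
  have hφN : Measurable fun (x : Fin N → ℕ → 𝒮 × (Fin p → ℝ) × (Fin p → ℝ) × ℝ) =>
      fun n => φ (x n) := measurable_pi_lambda _ fun n => hφm.comp (measurable_pi_apply n)
  have hDm : Measurable D := hφN.comp htr
  have hφlaw : (P.map fun ω => fun t : ℕ => (S t ω, A t ω, A' t ω, R t ω)).map φ
      = P.map fun ω => fun i : Fin (M + 1) => Z (k + i * K) ω := by
    rw [Measure.map_map hφm hpath]; rfl
  have hDlaw : P.map D = Measure.pi fun _ : Fin N =>
      P.map fun ω => fun i : Fin (M + 1) => Z (k + i * K) ω := by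
    have h1 : P.map D = (P.map (fun ω => fun n : Fin N => fun t : ℕ =>
        (tS n t ω, tA n t ω, tA' n t ω, tR n t ω))).map fun x n => φ (x n) := by
      rw [Measure.map_map hφN htr]; rfl
    rw [h1, hlaw, Measure.pi_map_pi (fun _ => hφm.aemeasurable)]
    simp only [hφlaw]
  -- the statistic as a function of the fold
  have hidx : ∀ i : {t : Fin T // (t : ℕ) % K = (k : ℕ)}, (i.1 : ℕ) / K < M + 1 := fun i =>
    Nat.lt_succ_of_le (Nat.div_le_div_right (by have := i.1.2; omega))
  set W' : (Fin N → Fin (M + 1) → Tup p 𝒮) → Fin p → ℝ := fun d =>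
    W fun i => d i.1 ⟨(i.2.1 : ℕ) / K, hidx i.2⟩ with hW'
  have hW'm : Measurable W' := hW.comp (measurable_pi_lambda _ fun i => by fun_prop)
  set F : Finset (Fin p) → ℝ := fun Gh =>
    ((Gh ∩ H0).card : ℝ) / (1 / α + (Gh.card : ℝ)) with hF
  have hHm : Measurable fun d => F (knockoffSelect α (W' d)) :=
    (measurable_comp_select α F).comp hW'm
  have hF0 : ∀ g, 0 ≤ F g := fun g => by simp only [hF]; positivity
  have hF1 : ∀ g, F g ≤ 1 := fun g => by
    simp only [hF]
    refine div_le_one_of_le₀ ?_ (by positivity)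
    have : ((g ∩ H0).card : ℝ) ≤ g.card := by
      exact_mod_cast Finset.card_le_card Finset.inter_subset_left
    have : 0 < 1 / α := by positivity
    linarith
  have hIntg : ∫ ω, F (knockoffSelect α (W (fun i =>
              (tA i.1 (i.2.1 : ℕ) ω, tA' i.1 (i.2.1 : ℕ) ω, tS i.1 (i.2.1 : ℕ) ω,
                (tR i.1 (i.2.1 : ℕ) ω, tS i.1 ((i.2.1 : ℕ) + 1) ω))))) ∂P
      = ∫ d, F (knockoffSelect α (W' d)) ∂(P.map D) := by
    rw [integral_map hDm.aemeasurable hHm.aestronglyMeasurable]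
    refine integral_congr_ae (Filter.Eventually.of_forall fun ω => ?_)
    simp only [hW', hD, hφ]
    congr 3
    funext i
    have : (k : ℕ) + (i.2.1 : ℕ) / K * K = (i.2.1 : ℕ) := by
      have h1 := i.2.2
      have h2 := Nat.mod_add_div' (i.2.1 : ℕ) K
      omega
    simp only [this]
  have hkn : ∫ d, F (knockoffSelect α (W' d)) ∂(Measure.pi fun _ : Fin N =>
      Measure.pi fun i : Fin (M + 1) => P.map (Z (k + i * K))) ≤ α := by
    refine knockoff_bound _ α hα H0 W' hW'm (fun j d n m => swapTup {j} (d n m)) ?_ ?_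
    · intro j hj
      have hj' : j ∉ G := by rw [hG] at hj; simpa using hj
      refine measurePreserving_pi _ _ fun n => measurePreserving_pi _ _ fun i => ?_
      exact tuple_swap_invariant P G {j} (by simpa using hj') (S _) (A _) (A' _) _
        (hS _) (hA _) (hA' _) ((hR _).prodMk (hS _)) (κ _) (hκ _) (hcond _) ν hν (hY _)
    · intro j _ d
      funext i
      exact hflip {j} _ i
  change ∫ ω, F (knockoffSelect α (W (fun i =>
              (tA i.1 (i.2.1 : ℕ) ω, tA' i.1 (i.2.1 : ℕ) ω, tS i.1 (i.2.1 : ℕ) ω,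
                (tR i.1 (i.2.1 : ℕ) ω, tS i.1 ((i.2.1 : ℕ) + 1) ω))))) ∂P ≤ _
  rw [hIntg, hDlaw]
  have herr : (N : ℝ≥0∞) * (M * ENNReal.ofReal (ρ ^ (K - 1)))
      = ENNReal.ofReal ((N : ℝ) * (M * ρ ^ (K - 1))) := by
    rw [ENNReal.ofReal_mul (by positivity), ENNReal.ofReal_mul (by positivity),
      ENNReal.ofReal_natCast, ENNReal.ofReal_natCast]
  rw [herr] at hpi
  have h1 := TVle.integral (by positivity) hpi (fun d => F (knockoffSelect α (W' d))) hHm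
    (fun d => hF0 _) (fun d => hF1 _)
  have h2 := error_bound ρ k0 hρ0 N T K hN hT hK hKeq
  linarith
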